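/- arXiv:1505.05976 — 12 statements merged into one kernel-verified Lean document; each statement's English description precedes it below -/
import Mathlib

section
/- Let K be a subfield of ℂ, let f ∈ K[X] be an irreducible polynomial of degree n ≥ 3, and let x₁ ∈ ℂ be a root of f. Let B = [[a, b], [c, d]] be an invertible 2×2 matrix with entries in K such that c·x₁ + d ≠ 0 and (a·x₁ + b)/(c·x₁ + d) = x₁. Then B is a scalar multiple of the identity matrix; that is, c = 0, b = 0, and a = d. -/
/-- If `K` is a subfield of `ℂ`, `f ∈ K[X]` is irreducible of degree `n ≥ 3`
with root `x₁ ∈ ℂ`, and `B = [[a,b],[c,d]]` is an invertible matrix over `K` whose Möbius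
transform fixes `x₁`, then `B` is a scalar matrix: `c = 0`, `b = 0` and `a = d`. -/
theorem stmt0 (K : Subfield ℂ) (f : Polynomial K) (hf : Irreducible f)
    (hdeg : 3 ≤ f.natDegree) (x₁ : ℂ) (hx : Polynomial.aeval x₁ f = 0)
    (a b c d : K) (hinv : a * d - b * c ≠ 0)
    (hden : (c : ℂ) * x₁ + (d : ℂ) ≠ 0)
    (hfix : ((a : ℂ) * x₁ + (b : ℂ)) / ((c : ℂ) * x₁ + (d : ℂ)) = x₁) :
    c = 0 ∧ b = 0 ∧ a = d := by
  rw [div_eq_iff hden] at hfix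
  set g : Polynomial K := Polynomial.C c * Polynomial.X ^ 2 + Polynomial.C (d - a) * Polynomial.X
    + Polynomial.C (-b) with hg
  have hgx : Polynomial.aeval x₁ g = 0 := by
    have e : ∀ k : K, algebraMap K ℂ k = (k : ℂ) := fun _ => rfl
    simp only [hg, map_add, map_mul, map_pow, Polynomial.aeval_X, Polynomial.aeval_C, e]
    push_cast
    linear_combination -hfix
  have hdvd : f ∣ g := by
    have h := minpoly.dvd K x₁ hgx
    rw [← minpoly.eq_of_irreducible hf hx] at h
    exact (Dvd.intro _ rfl).trans h
  have hg0 : g = 0 := by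
    by_contra h0
    have h1 := Polynomial.natDegree_le_of_dvd hdvd h0
    have h2 : g.natDegree ≤ 2 := Polynomial.natDegree_quadratic_le
    omega
  have h0 := congrArg (fun p => Polynomial.coeff p 0) hg0
  have h1 := congrArg (fun p => Polynomial.coeff p 1) hg0
  have h2 := congrArg (fun p => Polynomial.coeff p 2) hg0
  simp [hg, Polynomial.coeff_X, Polynomial.coeff_C, Polynomial.coeff_X_pow,
    -map_sub, -map_neg] at h0 h1 h2
  exact ⟨h2, h0, (sub_eq_zero.mp h1).symm⟩
end

section
/- Let n ≥ 3 be a natural number and set N = n if n is odd and N = 2n if n is even. Let ζ ∈ ℂ be a primitive N-th root of unity and let r ∈ ℂ be nonzero. Let A be a 2×2 complex matrix with trace r(ζ + ζ⁻¹) and determinant r². Then A^n is a scalar matrix; precisely, A^n = rⁿζⁿ·I, where ζⁿ = 1 if n is odd and ζⁿ = −1 if n is even. -/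
theorem aux_pow (A : Matrix (Fin 2) (Fin 2) ℂ) (a b : ℂ) (htr : A.trace = a + b)
    (hdet : A.det = a * b) (k : ℕ) :
    (a - b) • A ^ k = (a ^ k - b ^ k) • A - (a ^ k * b - a * b ^ k) • (1 : Matrix (Fin 2) (Fin 2) ℂ) := by
  have h2 : A * A = (a + b) • A - (a * b) • (1 : Matrix (Fin 2) (Fin 2) ℂ) := by
    rw [← htr, ← hdet, Matrix.trace_fin_two, Matrix.det_fin_two]
    ext i j
    fin_cases i <;> fin_cases j <;> simp [Matrix.mul_apply, Fin.sum_univ_two] <;> ring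
  induction k with
  | zero => simp only [pow_zero]; module
  | succ k ih =>
    rw [pow_succ, ← smul_mul_assoc, ih, sub_mul, smul_mul_assoc, smul_mul_assoc, h2, one_mul]
    module

/-- Let `n ≥ 3`, `N = n` if `n` odd and `N = 2n` if `n` even, `ζ` a primitive
`N`-th root of unity, `r ≠ 0`, and `A` a `2×2` complex matrix of trace `r(ζ + ζ⁻¹)` and
determinant `r²`.  Then `A ^ n = rⁿζⁿ • I`, where `ζⁿ = 1` for `n` odd and `ζⁿ = -1` for
`n` even. -/
theorem stmt1 (n : ℕ) (hn : 3 ≤ n) (N : ℕ) (hN : N = if Odd n then n else 2 * n)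
    (ζ : ℂ) (hζ : IsPrimitiveRoot ζ N) (r : ℂ) (hr : r ≠ 0)
    (A : Matrix (Fin 2) (Fin 2) ℂ)
    (htr : A.trace = r * (ζ + ζ⁻¹)) (hdet : A.det = r ^ 2) :
    A ^ n = (r ^ n * ζ ^ n) • (1 : Matrix (Fin 2) (Fin 2) ℂ) ∧
      (Odd n → ζ ^ n = 1) ∧ (¬ Odd n → ζ ^ n = -1) := by
  have hodd : Odd n → ζ ^ n = 1 := by
    intro h
    rw [if_pos h] at hN
    rw [← hN]; exact hζ.pow_eq_one
  have heven : ¬ Odd n → ζ ^ n = -1 := by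
    intro h
    rw [if_neg h] at hN
    have h1 : (ζ ^ n) ^ 2 = 1 := by
      rw [← pow_mul, mul_comm, ← hN]; exact hζ.pow_eq_one
    rcases (sq_eq_sq_iff_eq_or_eq_neg.mp (h1.trans (one_pow 2).symm)) with h3 | h3
    · exact absurd h3 (hζ.pow_ne_one_of_pos_of_lt (by omega) (by omega))
    · exact h3
  refine ⟨?_, hodd, heven⟩
  have hN3 : 3 ≤ N := by rw [hN]; split_ifs <;> omega
  have hz : ζ ≠ 0 := hζ.ne_zero (by omega)
  have hz2 : ζ ^ 2 ≠ 1 := hζ.pow_ne_one_of_pos_of_lt (by omega) (by omega)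
  have hinv : (ζ⁻¹) ^ n = ζ ^ n := by
    rw [inv_pow]
    by_cases h : Odd n
    · rw [hodd h]; norm_num
    · rw [heven h]; norm_num
  have hab : r * ζ - r * ζ⁻¹ ≠ 0 := by
    intro h
    apply hz2
    have h4 : ζ = ζ⁻¹ := mul_left_cancel₀ hr (sub_eq_zero.mp h)
    calc ζ ^ 2 = ζ * ζ := sq ζ
      _ = ζ * ζ⁻¹ := by rw [← h4]
      _ = 1 := mul_inv_cancel₀ hz
  have key := aux_pow A (r * ζ) (r * ζ⁻¹) (by rw [htr]; ring)
    (by rw [hdet]; field_simp) n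
  rw [mul_pow, mul_pow, hinv] at key
  apply smul_right_injective _ hab
  show (r * ζ - r * ζ⁻¹) • A ^ n = (r * ζ - r * ζ⁻¹) • _
  rw [key]
  module
end

section
/- Let n ≥ 3 be a natural number and set N = n if n is odd and N = 2n if n is even. Let ζ ∈ ℂ be a primitive N-th root of unity and let r ∈ ℂ be nonzero. Let A be a 2×2 complex matrix with trace r(ζ + ζ⁻¹) and determinant r². Then for every integer l with 1 ≤ l ≤ n − 1, the matrix A^l is not a scalar multiple of the identity matrix. -/
theorem eig_aux (A : Matrix (Fin 2) (Fin 2) ℂ) (x t : ℂ) (l : ℕ)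
    (h : x ^ 2 - A.trace * x + A.det = 0)
    (hA : A ^ l = t • (1 : Matrix (Fin 2) (Fin 2) ℂ)) : x ^ l = t := by
  have hd : (A - x • (1 : Matrix (Fin 2) (Fin 2) ℂ)).det = 0 := by
    rw [Matrix.trace_fin_two, Matrix.det_fin_two] at h
    rw [Matrix.det_fin_two]
    simp
    linear_combination h
  obtain ⟨v, hv, hAv⟩ := Matrix.exists_mulVec_eq_zero_iff.mpr hd
  have h1 : A.mulVec v = x • v := by
    rw [Matrix.sub_mulVec, Matrix.smul_mulVec, Matrix.one_mulVec] at hAv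
    exact sub_eq_zero.mp hAv
  have h2 : ∀ k : ℕ, (A ^ k).mulVec v = x ^ k • v := by
    intro k
    induction k with
    | zero => simp
    | succ k ih =>
      rw [pow_succ, ← Matrix.mulVec_mulVec, h1, Matrix.mulVec_smul, ih, smul_smul, pow_succ,
        mul_comm]
  have h3 := h2 l
  rw [hA, Matrix.smul_mulVec, Matrix.one_mulVec] at h3
  exact (smul_left_injective ℂ hv h3).symm

/-- With `n, N, ζ, r, A` as in Statement 1, for every `l` with
`1 ≤ l ≤ n - 1` the matrix `A ^ l` is not a scalar multiple of the identity. -/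
theorem stmt2 (n : ℕ) (hn : 3 ≤ n) (N : ℕ) (hN : N = if Odd n then n else 2 * n)
    (ζ : ℂ) (hζ : IsPrimitiveRoot ζ N) (r : ℂ) (hr : r ≠ 0)
    (A : Matrix (Fin 2) (Fin 2) ℂ)
    (htr : A.trace = r * (ζ + ζ⁻¹)) (hdet : A.det = r ^ 2) :
    ∀ l : ℕ, 1 ≤ l → l ≤ n - 1 → ∀ t : ℂ, A ^ l ≠ t • (1 : Matrix (Fin 2) (Fin 2) ℂ) := by
  intro l hl1 hl2 t hA
  have hN0 : N ≠ 0 := by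
    rw [hN]; split_ifs <;> omega
  have hz : ζ ≠ 0 := hζ.ne_zero hN0
  have hzz : ζ * ζ⁻¹ = 1 := mul_inv_cancel₀ hz
  have e1 := eig_aux A (r * ζ) t l (by
    rw [htr, hdet]; linear_combination (-r ^ 2) * hzz) hA
  have e2 := eig_aux A (r * ζ⁻¹) t l (by
    rw [htr, hdet]; linear_combination (-r ^ 2) * hzz) hA
  have e3 : ζ ^ l = (ζ⁻¹) ^ l := by
    rw [← e2, mul_pow, mul_pow] at e1
    exact mul_left_cancel₀ (pow_ne_zero l hr) e1
  have e4 : ζ ^ (2 * l) = 1 := by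
    rw [two_mul, pow_add]
    nth_rewrite 2 [e3]
    rw [← mul_pow, hzz, one_pow]
  have hdvd := hζ.dvd_of_pow_eq_one _ e4
  have hnl : n ∣ l := by
    rw [hN] at hdvd
    split_ifs at hdvd with ho
    · exact (Nat.Coprime.dvd_mul_left (Nat.coprime_two_right.mpr ho)).mp hdvd
    · exact Nat.dvd_of_mul_dvd_mul_left (by norm_num) hdvd
  have := Nat.le_of_dvd hl1 hnl
  omega
end

section
/- Let K be a subfield of ℂ, n ≥ 3, N = n if n is odd and N = 2n if n is even, ζ ∈ ℂ a primitive N-th root of unity, and r ∈ K nonzero. Let A = [[a, b], [c, d]] be an invertible 2×2 matrix with entries in K satisfying a + d = r(ζ + ζ⁻¹) and ad − bc = r². Let f₁ ∈ K[X] be irreducible of degree n with root x₁ ∈ ℂ, and suppose the iterated Möbius transforms x_j = A^{j−1}∘x₁ are defined (all denominators nonzero) for j = 1, …, n and are each roots of f₁. Then x₁, x₂, …, x_n are pairwise distinct. -/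
lemma aux_eig (M : Matrix (Fin 2) (Fin 2) ℂ) (μ s : ℂ) (m : ℕ)
    (h : (M - μ • (1 : Matrix (Fin 2) (Fin 2) ℂ)).det = 0)
    (hs : M ^ m = s • (1 : Matrix (Fin 2) (Fin 2) ℂ)) : μ ^ m = s := by
  obtain ⟨w, hw, hw2⟩ := Matrix.exists_mulVec_eq_zero_iff.mpr h
  have h1 : M.mulVec w = μ • w := by
    rw [Matrix.sub_mulVec, Matrix.smul_mulVec, Matrix.one_mulVec] at hw2
    exact sub_eq_zero.mp hw2
  have h2 : ∀ k : ℕ, (M ^ k).mulVec w = μ ^ k • w := by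
    intro k
    induction k with
    | zero => simp
    | succ k ih =>
      rw [pow_succ, ← Matrix.mulVec_mulVec, h1, Matrix.mulVec_smul, ih, smul_smul, pow_succ,
        mul_comm]
  have h3 := h2 m
  rw [hs, Matrix.smul_mulVec, Matrix.one_mulVec] at h3
  exact (smul_left_injective ℂ hw h3).symm

lemma aux_quad (K : Subfield ℂ) (f : Polynomial K) (hirr : Irreducible f) (hd : 3 ≤ f.natDegree)
    (x : ℂ) (hx : Polynomial.aeval x f = 0) (u v w : K)
    (h : (u : ℂ) * x ^ 2 + v * x + w = 0) : u = 0 ∧ v = 0 ∧ w = 0 := by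
  set p : Polynomial K := Polynomial.C u * Polynomial.X ^ 2 + Polynomial.C v * Polynomial.X
    + Polynomial.C w with hp
  have hpx : Polynomial.aeval x p = 0 := by
    simp only [hp, map_add, map_mul, map_pow, Polynomial.aeval_C, Polynomial.aeval_X]
    exact h
  have hp0 : p = 0 := by
    by_contra hne
    have h1 : f ∣ p := by
      have h2 := minpoly.dvd K x hpx
      rw [← minpoly.eq_of_irreducible hirr hx] at h2
      exact (dvd_mul_right _ _).trans h2
    have h3 := Polynomial.natDegree_le_of_dvd h1 hne
    have h4 : p.natDegree ≤ 2 := Polynomial.natDegree_quadratic_le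
    omega
  have e0 := congrArg (fun q => Polynomial.coeff q 0) hp0
  have e1 := congrArg (fun q => Polynomial.coeff q 1) hp0
  have e2 := congrArg (fun q => Polynomial.coeff q 2) hp0
  simp [hp, Polynomial.coeff_X, Polynomial.coeff_C, Polynomial.coeff_X_pow] at e0 e1 e2
  exact ⟨e2, e1, e0⟩

/-- With `K ⊆ ℂ`, `n ≥ 3`, `N`, a primitive `N`-th root of unity `ζ`,
`r ∈ K` nonzero, and an invertible matrix `A = [[a,b],[c,d]]` over `K` with
`a + d = r(ζ + ζ⁻¹)` and `ad - bc = r²`: if `f₁ ∈ K[X]` is irreducible of degree `n` with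
root `x₁`, and the iterated Möbius transforms `x j = A^j ∘ x₁` are defined for `j < n` and
are roots of `f₁`, then `x 0, …, x (n-1)` are pairwise distinct. -/
theorem stmt3 (K : Subfield ℂ) (n : ℕ) (hn : 3 ≤ n) (N : ℕ)
    (hN : N = if Odd n then n else 2 * n) (ζ : ℂ) (hζ : IsPrimitiveRoot ζ N)
    (r : K) (hr : r ≠ 0) (a b c d : K)
    (htr : ((a : ℂ) + (d : ℂ)) = (r : ℂ) * (ζ + ζ⁻¹))
    (hdet : a * d - b * c = r ^ 2)
    (f₁ : Polynomial K) (hirr : Irreducible f₁) (hdeg : f₁.natDegree = n)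
    (x₁ : ℂ) (hx₁ : Polynomial.aeval x₁ f₁ = 0)
    (M : Matrix (Fin 2) (Fin 2) ℂ) (hM : M = !![(a : ℂ), (b : ℂ); (c : ℂ), (d : ℂ)])
    (x : ℕ → ℂ)
    (hden : ∀ j < n, (M ^ j) 1 0 * x₁ + (M ^ j) 1 1 ≠ 0)
    (hx : ∀ j < n,
      x j = ((M ^ j) 0 0 * x₁ + (M ^ j) 0 1) / ((M ^ j) 1 0 * x₁ + (M ^ j) 1 1))
    (hroot : ∀ j < n, Polynomial.aeval (x j) f₁ = 0) :
    ∀ j < n, ∀ k < n, x j = x k → j = k := by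
  have hN0 : N ≠ 0 := by
    rw [hN]; split_ifs <;> omega
  have hζ0 : ζ ≠ 0 := hζ.ne_zero hN0
  have hrC : (r : ℂ) ≠ 0 := by exact_mod_cast hr
  have hdetC : (a : ℂ) * d - b * c = (r : ℂ) ^ 2 := by exact_mod_cast congrArg (Subtype.val) hdet
  have hMdet : M.det = (r : ℂ) ^ 2 := by
    rw [hM, Matrix.det_fin_two_of, hdetC]
  have key : ∀ j m : ℕ, j + m < n → 0 < m → x j = x (j + m) → False := by
    intro j m hjm hm hEq
    have hj : j < n := by omega
    rw [hx j hj, hx _ hjm, div_eq_div_iff (hden j hj) (hden _ hjm), pow_add] at hEq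
    have hPdet : (M ^ j).det ≠ 0 := by
      rw [Matrix.det_pow, hMdet]; positivity
    have hq : (M ^ m) 1 0 * x₁ ^ 2 + ((M ^ m) 1 1 - (M ^ m) 0 0) * x₁ + (- (M ^ m) 0 1) = 0 := by
      apply (mul_eq_zero.mp _).resolve_left hPdet
      rw [Matrix.det_fin_two]
      simp only [Matrix.mul_apply, Fin.sum_univ_two] at hEq
      linear_combination hEq
    obtain ⟨B, hB⟩ : ∃ B : Matrix (Fin 2) (Fin 2) K, M ^ m = B.map K.subtype := by
      refine ⟨!![a, b; c, d] ^ m, ?_⟩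
      rw [Matrix.map_pow, hM]
      congr 1
      ext i j
      fin_cases i <;> fin_cases j <;> rfl
    have hBe : ∀ i j, (M ^ m) i j = (B i j : ℂ) := by
      intro i j; rw [hB]; rfl
    obtain ⟨e1, e2, e3⟩ := aux_quad K f₁ hirr (by omega) x₁ hx₁ (B 1 0) (B 1 1 - B 0 0) (-B 0 1)
      (by rw [← hq, hBe, hBe, hBe, hBe]; push_cast; ring)
    have hs : M ^ m = (B 0 0 : ℂ) • (1 : Matrix (Fin 2) (Fin 2) ℂ) := by
      have e2' := sub_eq_zero.mp e2
      have e3' := neg_eq_zero.mp e3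
      ext i j
      rw [hBe]
      fin_cases i <;> fin_cases j <;> simp [e1, e2', e3']
    have m1 := aux_eig M (r * ζ) _ m (by
      rw [hM, Matrix.det_fin_two]
      simp
      have : ζ * ζ⁻¹ = 1 := mul_inv_cancel₀ hζ0
      linear_combination hdetC - r * ζ * htr - r ^ 2 * this) hs
    have m2 := aux_eig M (r * ζ⁻¹) _ m (by
      rw [hM, Matrix.det_fin_two]
      simp
      have : ζ * ζ⁻¹ = 1 := mul_inv_cancel₀ hζ0
      linear_combination hdetC - r * ζ⁻¹ * htr - r ^ 2 * this) hs
    rw [← m2, mul_pow, mul_pow] at m1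
    have m3 := mul_left_cancel₀ (pow_ne_zero m hrC) m1
    have m4 : ζ ^ (2 * m) = 1 := by
      rw [two_mul, pow_add]
      nth_rewrite 1 [m3]
      rw [← mul_pow, inv_mul_cancel₀ hζ0, one_pow]
    have hdvd := hζ.dvd_of_pow_eq_one _ m4
    rw [hN] at hdvd
    split_ifs at hdvd with ho
    · have := (Nat.Coprime.dvd_of_dvd_mul_left (Nat.coprime_two_right.mpr ho) hdvd)
      have := Nat.le_of_dvd hm this
      omega
    · have := Nat.le_of_dvd (by omega) hdvd
      omega
  intro j hj k hk h
  rcases lt_trichotomy j k with hlt | heq | hlt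
  · obtain ⟨m, rfl⟩ := Nat.exists_eq_add_of_lt hlt
    exact (key j (m + 1) (by omega) (by omega) h).elim
  · exact heq
  · obtain ⟨m, rfl⟩ := Nat.exists_eq_add_of_lt hlt
    exact (key k (m + 1) (by omega) (by omega) h.symm).elim
end

section
/- Let K be a subfield of ℂ, let A = [[a, b], [c, d]] be an invertible 2×2 matrix over K, n ≥ 3, and C ∈ K. In the field K(X) of rational functions over K, let F = X + A∘X + A²∘X + ⋯ + A^{n−1}∘X + C, and write F = f₁/f₂ with f₁, f₂ ∈ K[X] coprime. Let x₁ ∈ ℂ satisfy f₁(x₁) = 0, suppose the Möbius transforms A^j∘x₁ are defined for j = 1, …, n (all denominators nonzero), and suppose A^n∘x₁ = x₁. Then f₁(A∘x₁) = 0. -/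
def GoodAt (K : Subfield ℂ) (z : ℂ) (G : RatFunc K) (v : ℂ) : Prop :=
  ∃ p q : Polynomial K, Polynomial.aeval z q ≠ 0 ∧
    G = algebraMap (Polynomial K) (RatFunc K) p / algebraMap (Polynomial K) (RatFunc K) q ∧
    Polynomial.aeval z p = v * Polynomial.aeval z q

theorem GoodAt.plus {K : Subfield ℂ} {z : ℂ} {G H : RatFunc K} {v w : ℂ}
    (h1 : GoodAt K z G v) (h2 : GoodAt K z H w) : GoodAt K z (G + H) (v + w) := by
  obtain ⟨p, q, hq, rfl, hp⟩ := h1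
  obtain ⟨r, s, hs, rfl, hr⟩ := h2
  have hq0 : q ≠ 0 := by rintro rfl; simp at hq
  have hs0 : s ≠ 0 := by rintro rfl; simp at hs
  have hq1 := RatFunc.algebraMap_ne_zero hq0
  have hs1 := RatFunc.algebraMap_ne_zero hs0
  refine ⟨p * s + q * r, q * s, ?_, ?_, ?_⟩
  · rw [map_mul]; exact mul_ne_zero hq hs
  · rw [div_add_div _ _ hq1 hs1, map_add, map_mul, map_mul, map_mul]
  · rw [map_add, map_mul, map_mul, map_mul, hp, hr]; ring

theorem GoodAt.const {K : Subfield ℂ} (z : ℂ) (k : K) : GoodAt K z (RatFunc.C k) (k : ℂ) := by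
  refine ⟨Polynomial.C k, 1, by simp, by simp, ?_⟩
  simp [Subfield.coe_subtype]
  try rfl

theorem GoodAt.finsum {K : Subfield ℂ} {z : ℂ} (G : ℕ → RatFunc K) (v : ℕ → ℂ) (n : ℕ)
    (h : ∀ j < n, GoodAt K z (G j) (v j)) :
    GoodAt K z (∑ j ∈ Finset.range n, G j) (∑ j ∈ Finset.range n, v j) := by
  induction n with
  | zero => simpa using GoodAt.const (K := K) z 0
  | succ k ih =>
    rw [Finset.sum_range_succ, Finset.sum_range_succ]
    exact (ih fun j hj => h j (by omega)).plus (h k (by omega))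

theorem GoodAt.moeb {K : Subfield ℂ} {z : ℂ} (p q s t : K) (h : (s : ℂ) * z + t ≠ 0) :
    GoodAt K z ((RatFunc.C p * RatFunc.X + RatFunc.C q) / (RatFunc.C s * RatFunc.X + RatFunc.C t))
      (((p : ℂ) * z + q) / ((s : ℂ) * z + t)) := by
  have e : ∀ u v : K, Polynomial.aeval z (Polynomial.C u * Polynomial.X + Polynomial.C v)
      = (u : ℂ) * z + v := by
    intro u v
    simp only [map_add, map_mul, Polynomial.aeval_C, Polynomial.aeval_X]
    rfl
  refine ⟨Polynomial.C p * Polynomial.X + Polynomial.C q,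
    Polynomial.C s * Polynomial.X + Polynomial.C t, ?_, ?_, ?_⟩
  · rw [e]; exact h
  · simp
  · rw [e, e, div_mul_cancel₀ _ h]

theorem GoodAt.root {K : Subfield ℂ} {z v : ℂ} {f g : Polynomial K} (hc : IsCoprime f g)
    (hg : g ≠ 0) (h : GoodAt K z (algebraMap (Polynomial K) (RatFunc K) f /
        algebraMap (Polynomial K) (RatFunc K) g) v) :
    Polynomial.aeval z f = 0 ↔ v = 0 := by
  obtain ⟨p, q, hq, h, hp⟩ := h
  have hq0 : q ≠ 0 := by rintro rfl; simp at hq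
  rw [div_eq_div_iff (RatFunc.algebraMap_ne_zero hg) (RatFunc.algebraMap_ne_zero hq0),
    ← map_mul, ← map_mul] at h
  have h2 := congrArg (Polynomial.aeval z) (RatFunc.algebraMap_injective K h)
  rw [map_mul, map_mul, hp] at h2
  have h3 : Polynomial.aeval z f = v * Polynomial.aeval z g :=
    mul_right_cancel₀ hq (by rw [h2]; ring)
  constructor
  · intro h0
    rw [h0] at h3
    rcases mul_eq_zero.1 h3.symm with h4 | h4
    · exact h4
    · obtain ⟨r, s, hrs⟩ := hc
      have := congrArg (Polynomial.aeval z) hrs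
      simp [h0, h4] at this
  · rintro rfl
    simpa using h3

/-- Let `K ⊆ ℂ`, `A = [[a,b],[c,d]]` invertible over `K`, `n ≥ 3`, `C ∈ K`.
Let `F = X + A∘X + ⋯ + A^{n-1}∘X + C` in `K(X)`, written `F = f₁/f₂` with `f₁, f₂` coprime.
If `x₁` is a root of `f₁`, the Möbius transforms `A^j ∘ x₁` are defined for `j = 1, …, n`,
and `Aⁿ ∘ x₁ = x₁`, then `A ∘ x₁` is also a root of `f₁`. -/
theorem stmt4 (K : Subfield ℂ) (a b c d : K) (hinv : a * d - b * c ≠ 0)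
    (n : ℕ) (hn : 3 ≤ n) (C : K)
    (A : Matrix (Fin 2) (Fin 2) K) (hA : A = !![a, b; c, d])
    (F : RatFunc K)
    (hF : F = (∑ j ∈ Finset.range n,
        (RatFunc.C ((A ^ j) 0 0) * RatFunc.X + RatFunc.C ((A ^ j) 0 1)) /
          (RatFunc.C ((A ^ j) 1 0) * RatFunc.X + RatFunc.C ((A ^ j) 1 1))) + RatFunc.C C)
    (f₁ f₂ : Polynomial K) (hcop : IsCoprime f₁ f₂)
    (hquot : F = algebraMap (Polynomial K) (RatFunc K) f₁ /
        algebraMap (Polynomial K) (RatFunc K) f₂)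
    (x₁ : ℂ) (hx₁ : Polynomial.aeval x₁ f₁ = 0)
    (M : Matrix (Fin 2) (Fin 2) ℂ) (hM : M = !![(a : ℂ), (b : ℂ); (c : ℂ), (d : ℂ)])
    (hden : ∀ j : ℕ, 1 ≤ j → j ≤ n → (M ^ j) 1 0 * x₁ + (M ^ j) 1 1 ≠ 0)
    (hfix : ((M ^ n) 0 0 * x₁ + (M ^ n) 0 1) / ((M ^ n) 1 0 * x₁ + (M ^ n) 1 1) = x₁) :
    Polynomial.aeval (((a : ℂ) * x₁ + (b : ℂ)) / ((c : ℂ) * x₁ + (d : ℂ))) f₁ = 0 := by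
  have hMA : ∀ (j : ℕ) (i k : Fin 2), (M ^ j) i k = (((A ^ j) i k : K) : ℂ) := by
    have h1 : M = K.subtype.mapMatrix A := by
      rw [hM, hA]; ext i k; fin_cases i <;> fin_cases k <;> rfl
    intro j i k
    rw [h1, ← map_pow]; rfl
  have hf2 : f₂ ≠ 0 := by
    rintro rfl
    obtain ⟨r, s, hrs⟩ := hcop
    have := congrArg (Polynomial.aeval x₁) hrs
    simp [hx₁] at this
  have key : ∀ z : ℂ, (∀ j < n, (M ^ j) 1 0 * z + (M ^ j) 1 1 ≠ 0) →
      (Polynomial.aeval z f₁ = 0 ↔ (∑ j ∈ Finset.range n,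
        ((M ^ j) 0 0 * z + (M ^ j) 0 1) / ((M ^ j) 1 0 * z + (M ^ j) 1 1)) + (C : ℂ) = 0) := by
    intro z hz
    apply GoodAt.root hcop hf2
    rw [← hquot, hF]
    refine GoodAt.plus (GoodAt.finsum _ _ n fun j hj => ?_) (GoodAt.const z C)
    have := hz j hj
    simp only [hMA] at this ⊢
    exact GoodAt.moeb _ _ _ _ this
  have hd1 : (c : ℂ) * x₁ + d ≠ 0 := by
    have := hden 1 le_rfl (by omega)
    simpa [hM] using this
  have hs : ∀ (j : ℕ) (i : Fin 2), (M ^ j) i 0 * (((a : ℂ) * x₁ + b) / ((c : ℂ) * x₁ + d))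
      + (M ^ j) i 1 = ((M ^ (j + 1)) i 0 * x₁ + (M ^ (j + 1)) i 1) / ((c : ℂ) * x₁ + d) := by
    intro j i
    have e0 : (M ^ (j + 1)) i 0 = (M ^ j) i 0 * a + (M ^ j) i 1 * c := by
      rw [pow_succ, Matrix.mul_apply, Fin.sum_univ_two]; simp [hM]
    have e1 : (M ^ (j + 1)) i 1 = (M ^ j) i 0 * b + (M ^ j) i 1 * d := by
      rw [pow_succ, Matrix.mul_apply, Fin.sum_univ_two]; simp [hM]
    rw [e0, e1, eq_div_iff hd1, add_mul, mul_assoc, div_mul_cancel₀ _ hd1]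
    ring
  have h0 := (key x₁ (by
    intro j hj
    rcases Nat.eq_zero_or_pos j with rfl | h
    · simp
    · exact hden j h hj.le)).1 hx₁
  refine (key _ ?_).2 ?_
  · intro j hj
    rw [hs]
    exact div_ne_zero (hden (j + 1) (by omega) (by omega)) hd1
  · rw [← h0]
    congr 1
    simp only [hs, div_div_div_cancel_right₀ hd1]
    have t1 := Finset.sum_range_succ (fun j => ((M ^ j) 0 0 * x₁ + (M ^ j) 0 1) /
      ((M ^ j) 1 0 * x₁ + (M ^ j) 1 1)) n
    have t2 := Finset.sum_range_succ' (fun j => ((M ^ j) 0 0 * x₁ + (M ^ j) 0 1) /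
      ((M ^ j) 1 0 * x₁ + (M ^ j) 1 1)) n
    rw [t1, hfix] at t2
    simp at t2
    exact t2.symm
end

section
/- (Theorem 1) Let K be a subfield of ℂ, n ≥ 3, N = n if n is odd and N = 2n if n is even, ζ ∈ ℂ a primitive N-th root of unity, and r ∈ K nonzero. Let A ∈ GL(2, K) have trace r(ζ + ζ⁻¹) and determinant r². Let C ∈ K, let F = X + A∘X + A²∘X + ⋯ + A^{n−1}∘X + C in K(X), and let f₁ be a numerator polynomial of F. Suppose f₁ is irreducible over K and has degree n. Let x₁ ∈ ℂ be a root of f₁ and put x_j = A^{j−1}∘x₁ for j = 2, …, n. Then x₁, …, x_n are exactly the complex roots of f₁, the field K[x₁] is a Galois extension of K, and its Galois group is cyclic of order n, generated by the automorphism sending x₁ to x₂ = A∘x₁ (which acts on the roots as the n-cycle (x₁ x₂ … x_n)). -/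
open Polynomial IntermediateField

noncomputable def mob {K E : Type*} [Field K] [Field E] [Algebra K E]
    (B : Matrix (Fin 2) (Fin 2) K) (y : E) : E :=
  (algebraMap K E (B 0 0) * y + algebraMap K E (B 0 1)) /
    (algebraMap K E (B 1 0) * y + algebraMap K E (B 1 1))

section gen
variable {K E : Type*} [Field K] [Field E] [Algebra K E]

theorem lin_ne {y : E} (hy : ∀ k : K, y ≠ algebraMap K E k) {s t : K} (h : s ≠ 0 ∨ t ≠ 0) :
    algebraMap K E s * y + algebraMap K E t ≠ 0 := by
  intro h0
  by_cases hs : s = 0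
  · subst hs
    simp at h0 h
    exact h h0
  · apply hy (-t / s)
    have : algebraMap K E s ≠ 0 := by simpa using hs
    rw [map_div₀, map_neg]
    field_simp
    linear_combination h0

theorem den_ne {y : E} (hy : ∀ k : K, y ≠ algebraMap K E k) {B : Matrix (Fin 2) (Fin 2) K}
    (hB : B.det ≠ 0) :
    algebraMap K E (B 1 0) * y + algebraMap K E (B 1 1) ≠ 0 := by
  apply lin_ne hy
  by_contra h
  push Not at h
  apply hB
  rw [Matrix.det_fin_two, h.1, h.2]; ring

theorem mob_notin {y : E} (hy : ∀ k : K, y ≠ algebraMap K E k) {B : Matrix (Fin 2) (Fin 2) K}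
    (hB : B.det ≠ 0) (k : K) : mob B y ≠ algebraMap K E k := by
  intro h
  have hd := den_ne hy hB
  rw [mob, div_eq_iff hd] at h
  have : algebraMap K E (B 0 0 - k * B 1 0) * y + algebraMap K E (B 0 1 - k * B 1 1) = 0 := by
    simp only [map_sub, map_mul]
    linear_combination h
  refine lin_ne hy ?_ this
  by_contra h'
  push Not at h'
  apply hB
  rw [Matrix.det_fin_two]
  linear_combination B 1 1 * h'.1 - B 1 0 * h'.2

theorem mob_mob {y : E} (hy : ∀ k : K, y ≠ algebraMap K E k) {B D : Matrix (Fin 2) (Fin 2) K}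
    (hB : B.det ≠ 0) (hD : D.det ≠ 0) : mob B (mob D y) = mob (B * D) y := by
  have h1 := den_ne hy hD
  have h2 := den_ne (mob_notin hy hD) hB
  have h3 := den_ne (B := B * D) hy (by simp [hB, hD])
  have hv : mob D y * (algebraMap K E (D 1 0) * y + algebraMap K E (D 1 1)) =
      algebraMap K E (D 0 0) * y + algebraMap K E (D 0 1) := by
    rw [mob, div_mul_cancel₀ _ h1]
  generalize mob D y = v at *
  rw [mob, mob, div_eq_div_iff h2 h3]
  simp only [Matrix.mul_apply, Fin.sum_univ_two, map_add, map_mul]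
  linear_combination (-((algebraMap K E (B 0 0) * v + algebraMap K E (B 0 1)) *
    algebraMap K E (B 1 0)) + algebraMap K E (B 0 0) *
    (algebraMap K E (B 1 0) * v + algebraMap K E (B 1 1))) * hv

theorem sum_frac {ι : Type*} (s : Finset ι) (p q : ι → K[X]) (y : E)
    (hq : ∀ i ∈ s, aeval y (q i) ≠ 0) :
    ∃ P Q : K[X], aeval y Q ≠ 0 ∧
      (∑ i ∈ s, algebraMap K[X] (RatFunc K) (p i) / algebraMap K[X] (RatFunc K) (q i)) =
        algebraMap K[X] (RatFunc K) P / algebraMap K[X] (RatFunc K) Q ∧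
      (∑ i ∈ s, aeval y (p i) / aeval y (q i)) = aeval y P / aeval y Q := by
  classical
  induction s using Finset.induction_on with
  | empty => exact ⟨0, 1, by simp, by simp, by simp⟩
  | insert i s hi ih =>
    obtain ⟨P, Q, h1, h2, h3⟩ := ih (fun j hj => hq j (Finset.mem_insert_of_mem hj))
    have hqi := hq i (Finset.mem_insert_self _ _)
    have nz : ∀ g : K[X], aeval y g ≠ 0 → algebraMap K[X] (RatFunc K) g ≠ 0 := by
      intro g hg h
      have := (map_eq_zero_iff _ (RatFunc.algebraMap_injective K)).1 h
      simp [this] at hg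
    refine ⟨p i * Q + q i * P, q i * Q, by simp [hqi, h1], ?_, ?_⟩
    · rw [Finset.sum_insert hi, h2, div_add_div _ _ (nz _ hqi) (nz _ h1)]
      simp
    · rw [Finset.sum_insert hi, h3, div_add_div _ _ hqi h1]
      simp

theorem eval_F (A : Matrix (Fin 2) (Fin 2) K) (hA : A.det ≠ 0) (n : ℕ) (C : K) 
    (f₁ f₂ : K[X]) (hf₂ : f₂ ≠ 0)
    (hquot : (∑ j ∈ Finset.range n,
        (RatFunc.C ((A ^ j) 0 0) * RatFunc.X + RatFunc.C ((A ^ j) 0 1)) /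
          (RatFunc.C ((A ^ j) 1 0) * RatFunc.X + RatFunc.C ((A ^ j) 1 1))) + RatFunc.C C
      = algebraMap (Polynomial K) (RatFunc K) f₁ / algebraMap (Polynomial K) (RatFunc K) f₂)
    (y : E) (hy : ∀ k : K, y ≠ algebraMap K E k) :
    aeval y f₁ = aeval y f₂ * (∑ j ∈ Finset.range n, mob (A ^ j) y + algebraMap K E C) := by
  obtain ⟨P, Q, h1, h2, h3⟩ := sum_frac (Finset.range n)
    (fun j => Polynomial.C ((A ^ j) 0 0) * X + Polynomial.C ((A ^ j) 0 1))
    (fun j => Polynomial.C ((A ^ j) 1 0) * X + Polynomial.C ((A ^ j) 1 1)) y (by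
      intro j _
      have := den_ne (B := A ^ j) hy (by simp [Matrix.det_pow, hA])
      simpa using this)
  have hQ : algebraMap K[X] (RatFunc K) Q ≠ 0 := by
    intro h
    have := (map_eq_zero_iff _ (RatFunc.algebraMap_injective K)).1 h
    simp [this] at h1
  have hf : algebraMap K[X] (RatFunc K) f₂ ≠ 0 := by
    intro h
    exact hf₂ ((map_eq_zero_iff _ (RatFunc.algebraMap_injective K)).1 h)
  simp only [map_add, map_mul, RatFunc.algebraMap_C, RatFunc.algebraMap_X] at h2
  rw [h2] at hquot
  have h4 : (P + Polynomial.C C * Q) * f₂ = f₁ * Q := by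
    apply RatFunc.algebraMap_injective K
    simp only [map_add, map_mul, RatFunc.algebraMap_C]
    field_simp at hquot
    linear_combination hquot
  have h5 := congrArg (aeval y) h4
  simp only [map_add, map_mul, aeval_C, aeval_X] at h5 h3
  have h6 : (∑ j ∈ Finset.range n, mob (A ^ j) y) = aeval y P / aeval y Q := by
    rw [← h3]; rfl
  rw [h6]
  field_simp
  linear_combination -h5

theorem core (n : ℕ) (hn : 3 ≤ n) (A : Matrix (Fin 2) (Fin 2) K) (hA : A.det ≠ 0)
    (hAn : (A ^ n) 0 1 = 0 ∧ (A ^ n) 1 0 = 0 ∧ (A ^ n) 0 0 = (A ^ n) 1 1)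
    (hAj : ∀ j, 0 < j → j < n →
      ¬ ((A ^ j) 0 1 = 0 ∧ (A ^ j) 1 0 = 0 ∧ (A ^ j) 0 0 = (A ^ j) 1 1))
    (C : K) (f₁ f₂ : K[X]) (hcop : IsCoprime f₁ f₂)
    (hquot : (∑ j ∈ Finset.range n,
        (RatFunc.C ((A ^ j) 0 0) * RatFunc.X + RatFunc.C ((A ^ j) 0 1)) /
          (RatFunc.C ((A ^ j) 1 0) * RatFunc.X + RatFunc.C ((A ^ j) 1 1))) + RatFunc.C C
      = algebraMap (Polynomial K) (RatFunc K) f₁ / algebraMap (Polynomial K) (RatFunc K) f₂)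
    (hirr : Irreducible f₁) (hdeg : f₁.natDegree = n)
    (x₁ : E) (hx₁ : aeval x₁ f₁ = 0) :
    (∀ z : E, aeval z f₁ = 0 ↔ ∃ j < n, z = mob (A ^ j) x₁) ∧
    IsGalois K (IntermediateField.adjoin K {x₁}) ∧
    ∃ φ : (IntermediateField.adjoin K {x₁}) ≃ₐ[K] (IntermediateField.adjoin K {x₁}),
      (φ ⟨x₁, IntermediateField.subset_adjoin K {x₁} rfl⟩ : E) = mob (A ^ 1) x₁ ∧
      orderOf φ = n ∧
      ∀ ψ : (IntermediateField.adjoin K {x₁}) ≃ₐ[K] (IntermediateField.adjoin K {x₁}),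
        ψ ∈ Subgroup.zpowers φ := by
  classical
  have hf0 : f₁ ≠ 0 := hirr.ne_zero
  have hf₂ : f₂ ≠ 0 := by
    rintro rfl
    exact hirr.not_isUnit (isCoprime_zero_right.1 hcop)
  have hmin := minpoly.eq_of_irreducible hirr hx₁
  have hint : IsIntegral K x₁ := by
    rw [← isAlgebraic_iff_isIntegral]; exact ⟨f₁, hf0, hx₁⟩
  have hlow : ∀ g : K[X], g.natDegree < n → aeval x₁ g = 0 → g = 0 := by
    intro g hg h
    by_contra hg0
    have h1 : f₁ ∣ g := by
      refine dvd_trans ?_ (minpoly.dvd K x₁ h)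
      rw [← hmin]; exact Dvd.intro _ rfl
    have := natDegree_le_of_dvd h1 hg0
    omega
  have hy : ∀ k : K, x₁ ≠ algebraMap K E k := by
    intro k hk
    have := hlow (X - Polynomial.C k) (by rw [natDegree_X_sub_C]; omega) (by simp [hk])
    exact X_sub_C_ne_zero k this
  have hdetj : ∀ j, (A ^ j).det ≠ 0 := fun j => by simp [Matrix.det_pow, hA]
  have hxs : ∀ j, mob A (mob (A ^ j) x₁) = mob (A ^ (j + 1)) x₁ := by
    intro j
    rw [mob_mob hy hA (hdetj j), pow_succ']
  have hx0 : mob (A ^ 0) x₁ = x₁ := by simp [mob]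
  have hxn : mob (A ^ n) x₁ = x₁ := by
    have := den_ne hy (hdetj n)
    rw [mob, div_eq_iff this]
    obtain ⟨h1, h2, h3⟩ := hAn
    rw [h1, h2, h3]; simp; ring
  have hxj : ∀ j, 0 < j → j < n → mob (A ^ j) x₁ ≠ x₁ := by
    intro j h0 hj h
    rw [mob, div_eq_iff (den_ne hy (hdetj j))] at h
    have h1 := hlow (Polynomial.C ((A ^ j) 1 0) * X ^ 2 +
      Polynomial.C ((A ^ j) 1 1 - (A ^ j) 0 0) * X + Polynomial.C (-(A ^ j) 0 1))
      (lt_of_le_of_lt natDegree_quadratic_le hn) (by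
        simp only [map_add, map_mul, aeval_C, aeval_X, map_pow, map_sub, map_neg]
        linear_combination -h)
    apply hAj j h0 hj
    have c0 := congrArg (fun g => coeff g 0) h1
    have c1 := congrArg (fun g => coeff g 1) h1
    have c2 := congrArg (fun g => coeff g 2) h1
    simp [coeff_X, coeff_C] at c0 c1 c2
    exact ⟨c0, c2, (sub_eq_zero.1 c1).symm⟩
  have hroot : aeval (mob A x₁) f₁ = 0 := by
    have e1 := eval_F A hA n C f₁ f₂ hf₂ hquot x₁ hy
    have e2 := eval_F A hA n C f₁ f₂ hf₂ hquot (mob A x₁) (mob_notin hy hA)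
    rw [hx₁] at e1
    have hne : aeval x₁ f₂ ≠ 0 := by
      intro h
      obtain ⟨u, v, huv⟩ := hcop
      have := congrArg (aeval x₁) huv
      simp [hx₁, h] at this
    have e3 := (mul_eq_zero.1 e1.symm).resolve_left hne
    rw [e2]
    have e4 : ∑ j ∈ Finset.range n, mob (A ^ j) (mob A x₁)
        = ∑ j ∈ Finset.range n, mob (A ^ j) x₁ := by
      have t1 := Finset.sum_range_succ (fun j => mob (A ^ j) x₁) n
      have t2 := Finset.sum_range_succ' (fun j => mob (A ^ j) x₁) n
      rw [hxn] at t1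
      rw [hx0] at t2
      rw [t1] at t2
      rw [add_right_cancel t2]
      refine Finset.sum_congr rfl fun j _ => ?_
      rw [mob_mob hy (hdetj j) hA, pow_succ]
    rw [e4, e3, mul_zero]
  -- the field
  set g : K⟮x₁⟯ := ⟨x₁, IntermediateField.subset_adjoin K {x₁} rfl⟩ with hg
  have hgc : ∀ B : Matrix (Fin 2) (Fin 2) K, ((mob B g : K⟮x₁⟯) : E) = mob B x₁ := by
    intro B
    simp [mob, hg]
  have hfd : FiniteDimensional K K⟮x₁⟯ := IntermediateField.adjoin.finiteDimensional hint
  have hfr : Module.finrank K K⟮x₁⟯ = n := by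
    rw [IntermediateField.adjoin.finrank hint, ← hmin, natDegree_mul_C (by simpa using hf0), hdeg]
  have hmr : aeval (mob A g) (minpoly K x₁) = 0 := by
    apply (algebraMap K⟮x₁⟯ E).injective
    rw [map_zero, ← aeval_algebraMap_apply]
    change aeval ((mob A g : K⟮x₁⟯) : E) _ = 0
    rw [hgc, ← hmin]
    simp [hroot]
  let φ0 : K⟮x₁⟯ →ₐ[K] K⟮x₁⟯ := (IntermediateField.adjoin.powerBasis hint).lift (mob A g) (by
    rw [IntermediateField.adjoin.powerBasis_gen, IntermediateField.minpoly_gen]; exact hmr)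
  have hφ0 : φ0 g = mob A g := by
    have := (IntermediateField.adjoin.powerBasis hint).lift_gen (mob A g) (by
      rw [IntermediateField.adjoin.powerBasis_gen, IntermediateField.minpoly_gen]; exact hmr)
    have hgg : (IntermediateField.adjoin.powerBasis hint).gen = g := by
      rw [IntermediateField.adjoin.powerBasis_gen]; rfl
    calc φ0 g = φ0 (IntermediateField.adjoin.powerBasis hint).gen := by rw [hgg]
      _ = _ := this
  let φ : K⟮x₁⟯ ≃ₐ[K] K⟮x₁⟯ := AlgEquiv.ofBijective φ0 (Algebra.IsAlgebraic.algHom_bijective φ0)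
  have hφ : φ g = mob A g := hφ0
  have hφmob : ∀ (ψ : K⟮x₁⟯ ≃ₐ[K] K⟮x₁⟯) (B : Matrix (Fin 2) (Fin 2) K) (y : K⟮x₁⟯),
      ψ (mob B y) = mob B (ψ y) := by
    intro ψ B y; simp [mob]
  have hpow : ∀ j, (((φ ^ j) g : K⟮x₁⟯) : E) = mob (A ^ j) x₁ := by
    intro j
    have : (φ ^ j) g = mob (A ^ j) g := by
      induction j with
      | zero => simp [mob]
      | succ j ih =>
        rw [pow_succ, AlgEquiv.mul_apply, hφ, hφmob, ih]
        apply Subtype.ext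
        rw [hgc, ← hxs, mob, mob, ← hgc]
        simp [mob]
    rw [this, hgc]
  have hext : ∀ ψ : K⟮x₁⟯ ≃ₐ[K] K⟮x₁⟯, ψ g = g → ψ = 1 := by
    intro ψ h
    have h1 : (ψ : K⟮x₁⟯ →ₐ[K] K⟮x₁⟯) = AlgHom.id K _ := by
      apply (IntermediateField.adjoin.powerBasis hint).algHom_ext
      rw [IntermediateField.adjoin.powerBasis_gen]
      exact h
    ext y
    exact congrArg Subtype.val (DFunLike.congr_fun h1 y)
  have hord : orderOf φ = n := by
    rw [orderOf_eq_iff (by omega)]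
    refine ⟨hext _ (Subtype.ext ?_), ?_⟩
    · rw [hpow, hxn]
    · intro m hm h0 h
      apply hxj m h0 hm
      rw [← hpow, h]; rfl
  have hcard : Nat.card (K⟮x₁⟯ ≃ₐ[K] K⟮x₁⟯) = n := by
    apply le_antisymm
    · have := AlgEquiv.card_le (F := K) (K := K⟮x₁⟯)
      rw [Nat.card_eq_fintype_card]
      omega
    · rw [← hord]; exact Nat.le_of_dvd Nat.card_pos (orderOf_dvd_natCard φ)
  refine ⟨?_, ?_, φ, ?_, hord, ?_⟩
  · have hrj : ∀ j, aeval (mob (A ^ j) x₁) f₁ = 0 := by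
      intro j
      have h1 : aeval g f₁ = 0 := by
        apply (algebraMap K⟮x₁⟯ E).injective
        rw [map_zero, ← aeval_algebraMap_apply]
        exact hx₁
      have h2 : aeval ((φ ^ j) g) f₁ = 0 := by
        rw [aeval_algHom_apply (φ ^ j) g f₁, h1, map_zero]
      rw [← hpow]
      have h3 := congrArg (algebraMap K⟮x₁⟯ E) h2
      rw [map_zero, ← aeval_algebraMap_apply] at h3
      exact h3
    intro z
    constructor
    · intro hz
      have hinj : Set.InjOn (fun j => mob (A ^ j) x₁) (Finset.range n : Set ℕ) := by
        intro i hi j hj hij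
        have hi' : i < n := by simpa using hi
        have hj' : j < n := by simpa using hj
        apply pow_injOn_Iio_orderOf (x := φ) (by simpa [hord] using hi')
          (by simpa [hord] using hj')
        have h1 : (φ ^ i) g = (φ ^ j) g := by
          apply Subtype.ext; rw [hpow, hpow]; exact hij
        have h2 := hext ((φ ^ j)⁻¹ * φ ^ i) (by
          rw [AlgEquiv.mul_apply, h1, ← AlgEquiv.mul_apply, inv_mul_cancel]; rfl)
        exact (inv_mul_eq_one.1 h2).symm
      have hsub : (Finset.range n).image (fun j => mob (A ^ j) x₁)
          ⊆ (f₁.aroots E).toFinset := by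
        intro w hw
        obtain ⟨j, -, rfl⟩ := Finset.mem_image.1 hw
        simp [mem_aroots, hf0, hrj]
      have heq := Finset.eq_of_subset_of_card_le hsub (by
        rw [Finset.card_image_of_injOn hinj, Finset.card_range, ← hdeg]
        refine (Multiset.toFinset_card_le _).trans ((card_roots' _).trans ?_)
        rw [natDegree_map])
      have : z ∈ (f₁.aroots E).toFinset := by simp [mem_aroots, hf0, hz]
      rw [← heq] at this
      obtain ⟨j, hj, rfl⟩ := Finset.mem_image.1 this
      exact ⟨j, by simpa using hj, rfl⟩
    · rintro ⟨j, -, rfl⟩; exact hrj j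
  · exact IsGalois.of_card_aut_eq_finrank K _ (by rw [hcard, hfr])
  · rw [hφ, hgc, pow_one]
  · intro ψ
    have : Subgroup.zpowers φ = ⊤ := by
      apply Subgroup.eq_top_of_card_eq
      rw [Nat.card_zpowers, hord, hcard]
    rw [this]; trivial

end gen

theorem pow_formula (M : Matrix (Fin 2) (Fin 2) ℂ) (r z : ℂ) (hz : z ≠ 0)
    (htr : M 0 0 + M 1 1 = r * (z + z⁻¹)) (hdet : M 0 0 * M 1 1 - M 0 1 * M 1 0 = r ^ 2) (j : ℕ) :
    (z - z⁻¹) • M ^ (j + 1) = (r ^ j * (z ^ (j + 1) - z⁻¹ ^ (j + 1))) • M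
      - (r ^ (j + 1) * (z ^ j - z⁻¹ ^ j)) • (1 : Matrix (Fin 2) (Fin 2) ℂ) := by
  have hCH : M * M = (r * (z + z⁻¹)) • M - r ^ 2 • (1 : Matrix (Fin 2) (Fin 2) ℂ) := by
    rw [← htr, ← hdet]
    ext i k
    fin_cases i <;> fin_cases k <;> simp [Matrix.mul_apply, Fin.sum_univ_two] <;> ring
  induction j with
  | zero => simp
  | succ j ih =>
    rw [pow_succ, ← smul_mul_assoc, ih, sub_mul, smul_mul_assoc, smul_mul_assoc, hCH, one_mul,
      smul_sub, smul_smul, smul_smul, sub_right_comm, ← sub_smul]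
    have hw : z * z⁻¹ = 1 := mul_inv_cancel₀ hz
    generalize z⁻¹ = w at *
    congr 2
    · linear_combination (r ^ (j+1) * (z ^ j - w ^ j)) * hw
    · ring


/-- **Theorem 1.** Let `K ⊆ ℂ`, `n ≥ 3`, `N = n` (`n` odd) or `2n` (`n` even),
`ζ` a primitive `N`-th root of unity, `r ∈ K` nonzero, and `A = [[a,b],[c,d]] ∈ GL(2,K)` with
trace `r(ζ + ζ⁻¹)` and determinant `r²`.  Let `F = X + A∘X + ⋯ + A^{n-1}∘X + C = f₁/f₂`
with `f₁, f₂` coprime, and suppose `f₁` is irreducible of degree `n`.  For a root `x₁ ∈ ℂ`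
of `f₁` put `x j = A^j ∘ x₁`.  Then `x 0, …, x (n-1)` are exactly the complex roots of `f₁`,
`K[x₁]` is Galois over `K`, and its Galois group is cyclic of order `n`, generated by the
automorphism sending `x₁` to `x 1 = A ∘ x₁`. -/
theorem stmt5 (K : Subfield ℂ) (n : ℕ) (hn : 3 ≤ n) (N : ℕ)
    (hN : N = if Odd n then n else 2 * n) (ζ : ℂ) (hζ : IsPrimitiveRoot ζ N)
    (r : K) (hr : r ≠ 0) (a b c d : K)
    (htr : ((a : ℂ) + (d : ℂ)) = (r : ℂ) * (ζ + ζ⁻¹))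
    (hdet : a * d - b * c = r ^ 2)
    (C : K) (A : Matrix (Fin 2) (Fin 2) K) (hA : A = !![a, b; c, d])
    (F : RatFunc K)
    (hF : F = (∑ j ∈ Finset.range n,
        (RatFunc.C ((A ^ j) 0 0) * RatFunc.X + RatFunc.C ((A ^ j) 0 1)) /
          (RatFunc.C ((A ^ j) 1 0) * RatFunc.X + RatFunc.C ((A ^ j) 1 1))) + RatFunc.C C)
    (f₁ f₂ : Polynomial K) (hcop : IsCoprime f₁ f₂)
    (hquot : F = algebraMap (Polynomial K) (RatFunc K) f₁ /
        algebraMap (Polynomial K) (RatFunc K) f₂)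
    (hirr : Irreducible f₁) (hdeg : f₁.natDegree = n)
    (x₁ : ℂ) (hx₁ : Polynomial.aeval x₁ f₁ = 0)
    (M : Matrix (Fin 2) (Fin 2) ℂ) (hM : M = !![(a : ℂ), (b : ℂ); (c : ℂ), (d : ℂ)])
    (x : ℕ → ℂ)
    (hx : ∀ j : ℕ,
      x j = ((M ^ j) 0 0 * x₁ + (M ^ j) 0 1) / ((M ^ j) 1 0 * x₁ + (M ^ j) 1 1)) :
    (∀ z : ℂ, Polynomial.aeval z f₁ = 0 ↔ ∃ j < n, z = x j) ∧
    IsGalois K (IntermediateField.adjoin K {x₁}) ∧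
    ∃ φ : (IntermediateField.adjoin K {x₁}) ≃ₐ[K] (IntermediateField.adjoin K {x₁}),
      (φ ⟨x₁, IntermediateField.subset_adjoin K {x₁} rfl⟩ : ℂ) = x 1 ∧
      orderOf φ = n ∧
      ∀ ψ : (IntermediateField.adjoin K {x₁}) ≃ₐ[K] (IntermediateField.adjoin K {x₁}),
        ψ ∈ Subgroup.zpowers φ := by
  have hN3 : 3 ≤ N := by rw [hN]; split_ifs <;> omega
  have hz : ζ ≠ 0 := hζ.ne_zero (by omega)
  have hw : ζ * ζ⁻¹ = 1 := mul_inv_cancel₀ hz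
  have hrC : (r : ℂ) ≠ 0 := by simpa using hr
  have hMA : M = A.map (algebraMap K ℂ) := by
    rw [hM, hA]; ext i j; fin_cases i <;> fin_cases j <;> rfl
  have hMj : ∀ j, M ^ j = (A ^ j).map (algebraMap K ℂ) := by
    intro j; rw [hMA, ← Matrix.map_pow]
  have hdetA : A.det ≠ 0 := by
    rw [hA, Matrix.det_fin_two_of, hdet]; exact pow_ne_zero _ hr
  have hdetC : (a : ℂ) * d - b * c = r ^ 2 := by exact_mod_cast congrArg (Subtype.val) hdet
  have hpf := pow_formula M r ζ hz (by rw [hM]; simpa using htr) (by rw [hM]; simpa using hdetC)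
  -- vanishing of the coefficient
  have hcoef : ∀ j, ζ ^ j - ζ⁻¹ ^ j = 0 ↔ N ∣ 2 * j := by
    intro j
    rw [← hζ.pow_eq_one_iff_dvd, sub_eq_zero, inv_pow, ← mul_eq_one_iff_eq_inv₀ (pow_ne_zero _ hz),
      ← pow_add, two_mul]
  have hz1 : ζ - ζ⁻¹ ≠ 0 := by
    intro h
    have := (hcoef 1).1 (by simpa using h)
    have := Nat.le_of_dvd (by norm_num) this
    omega
  have hNn : N ∣ 2 * n := by
    rw [hN]; split_ifs
    · exact Dvd.intro_left _ rfl
    · exact dvd_rfl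
  have hNj : ∀ j, 0 < j → j < n → ¬ N ∣ 2 * j := by
    intro j h0 hj h
    rw [hN] at h
    split_ifs at h with ho
    · have := Nat.le_of_dvd h0 ((Nat.Coprime.dvd_of_dvd_mul_left
        (Nat.coprime_two_right.2 ho)) h)
      omega
    · have := Nat.le_of_dvd (by omega) h
      omega
  have hent : ∀ j i k, (M ^ j) i k = (((A ^ j) i k : K) : ℂ) := by
    intro j i k; rw [hMj]; rfl
  have key := core (E := ℂ) n hn A hdetA ?_ ?_ C f₁ f₂ hcop (hF.symm.trans hquot) hirr hdeg x₁ hx₁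
  · have hxm : ∀ j, x j = mob (A ^ j) x₁ := by
      intro j
      rw [hx j, hMj]; rfl
    simp only [hxm]
    exact key
  · obtain ⟨m, rfl⟩ : ∃ m, n = m + 1 := ⟨n - 1, by omega⟩
    have h := hpf m
    rw [(hcoef _).2 hNn] at h
    have h01 := congrFun (congrFun h 0) 1
    have h10 := congrFun (congrFun h 1) 0
    have h00 := congrFun (congrFun h 0) 0
    have h11 := congrFun (congrFun h 1) 1
    simp only [mul_zero, zero_smul, zero_sub, Matrix.smul_apply, Matrix.neg_apply, smul_eq_mul,
      hent] at h01 h10 h00 h11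
    simp at h01 h10
    refine ⟨h01.resolve_left hz1, h10.resolve_left hz1, Subtype.ext ?_⟩
    apply mul_left_cancel₀ hz1
    rw [h00, h11]; simp
  · rintro j h0 hj ⟨e1, e2, e3⟩
    obtain ⟨m, rfl⟩ : ∃ m, j = m + 1 := ⟨j - 1, by omega⟩
    have h := hpf m
    have hc : (r : ℂ) ^ m * (ζ ^ (m + 1) - ζ⁻¹ ^ (m + 1)) ≠ 0 :=
      mul_ne_zero (pow_ne_zero _ hrC) (fun h' => hNj _ h0 hj ((hcoef _).1 h'))
    generalize (r : ℂ) ^ m * (ζ ^ (m + 1) - ζ⁻¹ ^ (m + 1)) = u at h hc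
    have h01 := congrFun (congrFun h 0) 1
    have h00 := congrFun (congrFun h 0) 0
    have h11 := congrFun (congrFun h 1) 1
    simp only [Matrix.smul_apply, Matrix.sub_apply, smul_eq_mul, hent, e1, e3] at h01 h00 h11
    simp [hM, hc] at h01 h00 h11
    have had : (a : ℂ) = d := by
      apply mul_left_cancel₀ hc
      linear_combination h11 - h00
    have : (r : ℂ) ^ 2 * (ζ - ζ⁻¹) ^ 2 = 0 := by
      rw [h01] at hdetC
      rw [had] at hdetC htr
      have hd2 : (d : ℂ) ^ 2 = r ^ 2 := by first | (simp at hdetC; linear_combination hdetC) | linear_combination hdetC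
      linear_combination (-(2 * (d : ℂ) + r * (ζ + ζ⁻¹))) * htr + 4 * hd2 - 4 * (r : ℂ) ^ 2 * hw
    have := mul_eq_zero.1 this
    rcases this with h' | h'
    · exact hrC (pow_eq_zero_iff (two_ne_zero) |>.1 h')
    · exact hz1 (pow_eq_zero_iff (two_ne_zero) |>.1 h')
end

section
/- Let K be a field, A = [[a, b], [c, d]] an invertible 2×2 matrix over K, n ≥ 1, and C ∈ K. In the rational function field K(X), let F = X + A∘X + A²∘X + ⋯ + A^{n−1}∘X + C and write F = f₁/f₂ with f₁, f₂ ∈ K[X] coprime. Then the degree of f₁ is at most n. -/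
open Polynomial in
lemma aux_frac {K : Type*} [Field K] (p q r s : ℕ → K) (C : K) (n : ℕ) :
    ∃ P Q : K[X], Q ≠ 0 ∧ P.natDegree ≤ n ∧ Q.natDegree ≤ n ∧
      (∑ j ∈ Finset.range n, (RatFunc.C (p j) * RatFunc.X + RatFunc.C (q j)) /
          (RatFunc.C (r j) * RatFunc.X + RatFunc.C (s j))) + RatFunc.C C =
        algebraMap K[X] (RatFunc K) P / algebraMap K[X] (RatFunc K) Q := by
  induction n with
  | zero => exact ⟨Polynomial.C C, 1, one_ne_zero, by simp, by simp, by simp⟩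
  | succ n ih =>
    obtain ⟨P, Q, hQ, hP1, hQ1, h⟩ := ih
    rw [Finset.sum_range_succ, add_right_comm, h]
    have e1 : ∀ x y : K, RatFunc.C x * RatFunc.X + RatFunc.C y =
        algebraMap K[X] (RatFunc K) (Polynomial.C x * X + Polynomial.C y) := by
      intro x y; simp
    rw [e1, e1]
    have hd : ∀ x y : K, (Polynomial.C x * X + Polynomial.C y).natDegree ≤ 1 :=
      fun x y => natDegree_linear_le
    generalize hU : Polynomial.C (p n) * X + Polynomial.C (q n) = U
    generalize hV : Polynomial.C (r n) * X + Polynomial.C (s n) = V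
    have hU1 : U.natDegree ≤ 1 := hU ▸ hd _ _
    have hV1 : V.natDegree ≤ 1 := hV ▸ hd _ _
    by_cases hV0 : V = 0
    · exact ⟨P, Q, hQ, by omega, by omega, by simp [hV0]⟩
    · refine ⟨P * V + Q * U, Q * V, mul_ne_zero hQ hV0, ?_, ?_, ?_⟩
      · exact natDegree_add_le_of_degree_le (natDegree_mul_le_of_le hP1 hV1)
          (natDegree_mul_le_of_le hQ1 hU1)
      · exact natDegree_mul_le_of_le hQ1 hV1
      · rw [div_add_div _ _ (RatFunc.algebraMap_ne_zero hQ) (RatFunc.algebraMap_ne_zero hV0)]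
        simp

/-- Let `K` be a field, `A = [[a,b],[c,d]]` an invertible matrix over `K`,
`n ≥ 1`, `C ∈ K`, and `F = X + A∘X + ⋯ + A^{n-1}∘X + C` in `K(X)`, written `F = f₁/f₂`
with `f₁, f₂` coprime.  Then `deg f₁ ≤ n`. -/
theorem stmt6 {K : Type*} [Field K] (a b c d : K) (hinv : a * d - b * c ≠ 0)
    (n : ℕ) (hn : 1 ≤ n) (C : K)
    (A : Matrix (Fin 2) (Fin 2) K) (hA : A = !![a, b; c, d])
    (F : RatFunc K)
    (hF : F = (∑ j ∈ Finset.range n,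
        (RatFunc.C ((A ^ j) 0 0) * RatFunc.X + RatFunc.C ((A ^ j) 0 1)) /
          (RatFunc.C ((A ^ j) 1 0) * RatFunc.X + RatFunc.C ((A ^ j) 1 1))) + RatFunc.C C)
    (f₁ f₂ : Polynomial K) (hcop : IsCoprime f₁ f₂)
    (hquot : F = algebraMap (Polynomial K) (RatFunc K) f₁ /
        algebraMap (Polynomial K) (RatFunc K) f₂) :
    f₁.natDegree ≤ n := by
  obtain ⟨P, Q, hQ, hP1, hQ1, h⟩ := aux_frac (fun j => (A ^ j) 0 0) (fun j => (A ^ j) 0 1)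
    (fun j => (A ^ j) 1 0) (fun j => (A ^ j) 1 1) C n
  by_cases h2 : f₂ = 0
  · subst h2
    have : IsUnit f₁ := isCoprime_zero_right.mp hcop
    rw [Polynomial.natDegree_eq_zero_of_isUnit this]
    exact Nat.zero_le _
  have e := hquot.symm.trans (hF.trans h)
  rw [div_eq_div_iff (RatFunc.algebraMap_ne_zero h2) (RatFunc.algebraMap_ne_zero hQ),
    ← map_mul, ← map_mul] at e
  have e' := RatFunc.algebraMap_injective K e
  by_cases hP : P = 0
  · rw [hP, zero_mul] at e'
    rcases mul_eq_zero.mp e' with h0 | h0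
    · simp [h0]
    · exact absurd h0 hQ
  · have hdvd : f₁ ∣ P := hcop.dvd_of_dvd_mul_right (Dvd.intro _ e')
    exact (Polynomial.natDegree_le_of_dvd hdvd hP).trans hP1
end

section
/- Let K be a subfield of ℝ, let A = [[a, b], [c, d]] be an invertible 2×2 matrix over K with positive determinant ad − bc > 0, and let f ∈ K[X] be a nonconstant polynomial. Let x₁ ∈ ℂ be a root of f, suppose the Möbius transforms A^j∘x₁ are defined for j = 0, …, n − 1 (all denominators nonzero), and suppose that every complex root of f equals A^j∘x₁ for some j with 0 ≤ j ≤ n − 1. Then every complex root of f is real. -/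
theorem mob_im (p q s t : ℝ) (x : ℂ) :
    (((p : ℂ) * x + q) / ((s : ℂ) * x + t)).im
      = (p * t - q * s) / Complex.normSq ((s : ℂ) * x + t) * x.im := by
  rw [Complex.div_im]
  simp
  ring

/-- Let `K ⊆ ℝ`, let `A = [[a,b],[c,d]]` be a matrix over `K` with positive
determinant, and let `f ∈ K[X]` be nonconstant with root `x₁ ∈ ℂ`.  If the Möbius transforms
`A^j ∘ x₁` are defined for `j = 0, …, n-1` and every complex root of `f` is of the form
`A^j ∘ x₁` with `j < n`, then every complex root of `f` is real. -/
theorem stmt8 (K : Subfield ℝ) (a b c d : K)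
    (hdet : 0 < (a : ℝ) * (d : ℝ) - (b : ℝ) * (c : ℝ))
    (f : Polynomial K) (hf : f.natDegree ≠ 0)
    (x₁ : ℂ) (hx₁ : Polynomial.aeval x₁ (f.map (algebraMap K ℝ)) = 0)
    (n : ℕ)
    (M : Matrix (Fin 2) (Fin 2) ℂ)
    (hM : M = !![((a : ℝ) : ℂ), ((b : ℝ) : ℂ); ((c : ℝ) : ℂ), ((d : ℝ) : ℂ)])
    (hden : ∀ j < n, (M ^ j) 1 0 * x₁ + (M ^ j) 1 1 ≠ 0)
    (hcover : ∀ z : ℂ, Polynomial.aeval z (f.map (algebraMap K ℝ)) = 0 →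
      ∃ j < n, z = ((M ^ j) 0 0 * x₁ + (M ^ j) 0 1) / ((M ^ j) 1 0 * x₁ + (M ^ j) 1 1)) :
    ∀ z : ℂ, Polynomial.aeval z (f.map (algebraMap K ℝ)) = 0 → z.im = 0 := by
  set R : Matrix (Fin 2) (Fin 2) ℝ := !![(a : ℝ), (b : ℝ); (c : ℝ), (d : ℝ)] with hR
  have hMR : M = Complex.ofRealHom.mapMatrix R := by
    rw [hM]
    ext i j
    fin_cases i <;> fin_cases j <;> simp [hR]
  have hpow : ∀ (j : ℕ) (u v : Fin 2), (M ^ j) u v = (((R ^ j) u v : ℝ) : ℂ) := by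
    intro j u v
    rw [hMR, ← map_pow]
    rfl
  have hdR : ∀ j : ℕ, 0 < (R ^ j) 0 0 * (R ^ j) 1 1 - (R ^ j) 0 1 * (R ^ j) 1 0 := by
    intro j
    rw [← Matrix.det_fin_two, Matrix.det_pow]
    apply pow_pos
    rw [Matrix.det_fin_two]
    simpa [hR] using hdet
  have key : ∀ z : ℂ, Polynomial.aeval z (f.map (algebraMap K ℝ)) = 0 →
      ∃ r : ℝ, 0 ≤ r ∧ z.im = r * x₁.im := by
    intro z hz
    obtain ⟨j, -, h⟩ := hcover z hz
    simp only [hpow] at h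
    refine ⟨_, ?_, by rw [h, mob_im]⟩
    exact div_nonneg (hdR j).le (Complex.normSq_nonneg _)
  have h0 : x₁.im = 0 := by
    obtain ⟨r, hr, h⟩ := key (starRingEnd ℂ x₁) (by rw [Polynomial.aeval_conj, hx₁, map_zero])
    rw [Complex.conj_im] at h
    have h2 : (r + 1) * x₁.im = 0 := by linarith
    rcases mul_eq_zero.1 h2 with h3 | h3
    · linarith
    · exact h3
  intro z hz
  obtain ⟨r, -, h⟩ := key z hz
  rw [h, h0, mul_zero]
end

section
/- Let f ∈ ℚ[X] be an irreducible polynomial of degree 2n with n ≥ 1, let L ⊆ ℂ be the splitting field of f over ℚ, let z ∈ L be a root of f, and suppose there exists an automorphism σ of L over ℚ of order n with σ(z) = z. Then the degree [L : ℚ] is at least 2n². -/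
/-- Let `f ∈ ℚ[X]` be irreducible of degree `2n` (`n ≥ 1`), let `L ⊆ ℂ` be
its splitting field over `ℚ`, let `z ∈ L` be a root of `f`, and suppose some automorphism
`σ` of `L` over `ℚ` has order `n` and fixes `z`.  Then `[L : ℚ] ≥ 2n²`. -/
theorem stmt11 (n : ℕ) (hn : 1 ≤ n) (f : Polynomial ℚ) (hirr : Irreducible f)
    (hdeg : f.natDegree = 2 * n)
    (L : IntermediateField ℚ ℂ) (hL : L = IntermediateField.adjoin ℚ (f.rootSet ℂ))
    (z : L) (hz : Polynomial.aeval (z : ℂ) f = 0)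
    (σ : L ≃ₐ[ℚ] L) (hord : orderOf σ = n) (hfix : σ z = z) :
    2 * n ^ 2 ≤ Module.finrank ℚ L := by
  have hfd : FiniteDimensional ℚ L := by
    rw [hL]
    refine IntermediateField.finiteDimensional_adjoin (fun x hx => ?_)
    exact ⟨f, hirr.ne_zero, (Polynomial.mem_rootSet.1 hx).2⟩ |> IsAlgebraic.isIntegral
  have hz' : Polynomial.aeval z f = 0 := by
    apply Subtype.ext
    have h := Polynomial.aeval_algebraMap_apply ℂ z f
    exact h.symm.trans hz
  set F := IntermediateField.fixedField (Subgroup.zpowers σ) with hF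
  have h1 : Module.finrank F L = n := by
    rw [hF, IntermediateField.finrank_fixedField_eq_card, Nat.card_zpowers, hord]
  have h2 : Module.finrank ℚ (IntermediateField.adjoin ℚ {z}) = 2 * n := by
    rw [IntermediateField.adjoin.finrank (Algebra.IsIntegral.isIntegral z),
      ← minpoly.eq_of_irreducible hirr hz', Polynomial.natDegree_mul_C, hdeg]
    exact inv_ne_zero (Polynomial.leadingCoeff_ne_zero.2 hirr.ne_zero)
  have h3 : IntermediateField.adjoin ℚ {z} ≤ F := by
    rw [IntermediateField.adjoin_simple_le_iff, hF, IntermediateField.mem_fixedField_iff]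
    intro g hg
    have : Subgroup.zpowers σ ≤ MulAction.stabilizer (L ≃ₐ[ℚ] L) z := by
      rw [Subgroup.zpowers_le]
      exact hfix
    exact this hg
  have h4 : Module.finrank ℚ (IntermediateField.adjoin ℚ {z}) ≤ Module.finrank ℚ F :=
    Submodule.finrank_mono (s := (IntermediateField.adjoin ℚ {z}).toSubalgebra.toSubmodule)
      (t := F.toSubalgebra.toSubmodule) h3
  have h5 := Module.finrank_mul_finrank ℚ F L
  rw [h1] at h5
  rw [h2] at h4
  nlinarith
end

section
/- (Theorem 2) Let D be a squarefree integer with D ≥ 2, K = ℚ(√D) ⊆ ℂ, and let ' denote the nontrivial automorphism of K, extended coefficientwise to K[X]. Let n ≥ 3 and let f₁ ∈ K[X] be monic of degree n, not lying in ℚ[X], such that: (i) f₁ has a root x₁ ∈ ℂ with all complex roots of f₁ contained in K(x₁), and (ii) the conjugate polynomial f₁' has a root y₁ ∈ ℂ with all complex roots of f₁' contained in K(y₁). Suppose f = f₁·f₁' (which has rational coefficients) is irreducible in ℚ[X], and suppose there exists an automorphism σ of the splitting field of f over ℚ of order n fixing some root z of f (as is guaranteed when an integer multiple of f has a factorization of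 type (n, 1, …, 1) modulo some prime p). Then L = K(x₁, y₁) is the splitting field of f over ℚ, and [L : ℚ] = 2n². -/
/-- The quadratic field `ℚ(√D)` as a subfield of `ℂ`. -/
noncomputable def ratSqrtField (D : ℤ) : IntermediateField ℚ ℂ :=
  IntermediateField.adjoin ℚ {((Real.sqrt (D : ℝ) : ℝ) : ℂ)}

/-- `√D` as an element of `ℚ(√D)`. -/
noncomputable def ratSqrt (D : ℤ) : ratSqrtField D :=
  ⟨((Real.sqrt (D : ℝ) : ℝ) : ℂ), IntermediateField.subset_adjoin ℚ _ rfl⟩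

open Polynomial IntermediateField in
lemma aux_bound (E : IntermediateField ℚ ℂ) [FiniteDimensional ℚ E] (p : Polynomial E)
    (hp : p.Monic) (v : ℂ) (hv : aeval v p = 0) :
    FiniteDimensional ℚ ((adjoin E {v}).restrictScalars ℚ) ∧
    Module.finrank ℚ ((adjoin E {v}).restrictScalars ℚ) ≤ Module.finrank ℚ E * p.natDegree := by
  have hint : IsIntegral E v := ⟨p, hp, hv⟩
  have h1 : FiniteDimensional E (adjoin E {v}) := adjoin.finiteDimensional hint
  have h2 : Module.finrank E (adjoin E {v}) ≤ p.natDegree := by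
    rw [adjoin.finrank hint]
    exact natDegree_le_of_dvd (minpoly.dvd E v hv) hp.ne_zero
  have h3 : Module.finrank ℚ E * Module.finrank E (adjoin E {v})
      = Module.finrank ℚ (adjoin E {v}) := Module.finrank_mul_finrank ℚ E (adjoin E {v})
  have h4 : FiniteDimensional ℚ (adjoin E {v}) := FiniteDimensional.trans ℚ E (adjoin E {v})
  refine ⟨h4, ?_⟩
  change Module.finrank ℚ (adjoin E {v}) ≤ _
  rw [← h3]
  exact Nat.mul_le_mul_left _ h2

open Polynomial IntermediateField in
lemma aux_K (D : ℤ) (hD2 : 2 ≤ D) : FiniteDimensional ℚ (ratSqrtField D) ∧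
    Module.finrank ℚ (ratSqrtField D) ≤ 2 := by
  have hv : aeval (((Real.sqrt (D : ℝ) : ℝ) : ℂ)) (X ^ 2 - C (D : ℚ) : ℚ[X]) = 0 := by
    have : ((Real.sqrt (D : ℝ)) ^ 2) = (D : ℝ) := Real.sq_sqrt (by exact_mod_cast (by omega))
    have h2 : (((Real.sqrt (D : ℝ) : ℝ) : ℂ)) ^ 2 = (D : ℂ) := by exact_mod_cast this
    simp [h2]
  have hp : (X ^ 2 - C (D : ℚ) : ℚ[X]).Monic := monic_X_pow_sub_C _ (by norm_num)
  have hint : IsIntegral ℚ (((Real.sqrt (D : ℝ) : ℝ) : ℂ)) := ⟨_, hp, hv⟩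
  refine ⟨adjoin.finiteDimensional hint, ?_⟩
  unfold ratSqrtField
  rw [adjoin.finrank hint]
  refine (natDegree_le_of_dvd (minpoly.dvd ℚ _ hv) hp.ne_zero).trans ?_
  rw [natDegree_X_pow_sub_C]

open Polynomial IntermediateField in
lemma aux_lower (F : IntermediateField ℚ ℂ) [FiniteDimensional ℚ F] (τ : F ≃ₐ[ℚ] F) (z : F)
    (hτz : τ z = z) (g : ℚ[X]) (hirr : Irreducible g) (hz : aeval (z : ℂ) g = 0) :
    g.natDegree * orderOf τ ≤ Module.finrank ℚ F := by
  have h1 : ℚ⟮z⟯ ≤ fixedField (Subgroup.zpowers τ) := by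
    rw [adjoin_simple_le_iff]
    rintro ⟨t, ht⟩
    obtain ⟨k, rfl⟩ := ht
    have : τ ∈ MulAction.stabilizer (F ≃ₐ[ℚ] F) z := hτz
    exact (MulAction.stabilizer (F ≃ₐ[ℚ] F) z).zpow_mem this k
  have hz' : aeval z g = 0 := by
    apply Subtype.ext
    have h := aeval_algebraMap_apply ℂ z g
    change aeval (z : ℂ) g = _ at h
    rw [hz] at h
    exact h.symm
  have h2 : Module.finrank ℚ ℚ⟮z⟯ = g.natDegree := by
    rw [adjoin.finrank (Algebra.IsIntegral.isIntegral z), ← minpoly.eq_of_irreducible hirr hz']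
    rw [natDegree_mul_C (by simpa using hirr.ne_zero)]
  have h3 := finrank_fixedField_eq_card (Subgroup.zpowers τ)
  rw [Nat.card_zpowers] at h3
  rw [← Module.finrank_mul_finrank ℚ (fixedField (Subgroup.zpowers τ)) F, h3, ← h2]
  exact Nat.mul_le_mul_right _ (Submodule.finrank_mono (s := ℚ⟮z⟯.toSubalgebra.toSubmodule) (t := (fixedField (Subgroup.zpowers τ)).toSubalgebra.toSubmodule) h1)

/-- **Theorem 2.** Let `D ≥ 2` be squarefree, `K = ℚ(√D) ⊆ ℂ` with nontrivial
automorphism `σ` (`σ(√D) = -√D`), `n ≥ 3`, and let `f₁ ∈ K[X]` be monic of degree `n`, not in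
`ℚ[X]`, such that all roots of `f₁` lie in `K(x₁)` for a root `x₁` and all roots of the
conjugate polynomial `f₁'` lie in `K(y₁)` for a root `y₁`.  Suppose `f = f₁·f₁'` equals
`g ∈ ℚ[X]` which is irreducible over `ℚ`, and that some automorphism of the splitting field
of `g` over `ℚ` has order `n` and fixes a root `z` of `g`.  Then `L = K(x₁, y₁) = ℚ(√D, x₁, y₁)`
is the splitting field of `f` over `ℚ`, and `[L : ℚ] = 2n²`. -/
theorem stmt12 (D : ℤ) (hD : Squarefree D) (hD2 : 2 ≤ D)
    (σ : ratSqrtField D ≃ₐ[ℚ] ratSqrtField D)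
    (hσ : σ (ratSqrt D) = -ratSqrt D)
    (n : ℕ) (hn : 3 ≤ n)
    (f₁ : Polynomial (ratSqrtField D)) (hmonic : f₁.Monic) (hdeg : f₁.natDegree = n)
    (hnotQ : ¬ ∀ i : ℕ, f₁.coeff i ∈ (algebraMap ℚ (ratSqrtField D)).range)
    (x₁ y₁ : ℂ)
    (hx₁ : Polynomial.aeval x₁ f₁ = 0)
    (hxall : ∀ z : ℂ, Polynomial.aeval z f₁ = 0 →
      z ∈ IntermediateField.adjoin (ratSqrtField D) {x₁})
    (hy₁ : Polynomial.aeval y₁ (f₁.map (σ : ratSqrtField D →+* ratSqrtField D)) = 0)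
    (hyall : ∀ z : ℂ,
      Polynomial.aeval z (f₁.map (σ : ratSqrtField D →+* ratSqrtField D)) = 0 →
      z ∈ IntermediateField.adjoin (ratSqrtField D) {y₁})
    (g : Polynomial ℚ)
    (hg : g.map (algebraMap ℚ (ratSqrtField D)) =
      f₁ * f₁.map (σ : ratSqrtField D →+* ratSqrtField D))
    (hirr : Irreducible g)
    (τ : (IntermediateField.adjoin ℚ (g.rootSet ℂ)) ≃ₐ[ℚ]
      (IntermediateField.adjoin ℚ (g.rootSet ℂ)))
    (hτord : orderOf τ = n)
    (z : IntermediateField.adjoin ℚ (g.rootSet ℂ))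
    (hzroot : Polynomial.aeval (z : ℂ) g = 0)
    (hτz : τ z = z) :
    IntermediateField.adjoin ℚ {((Real.sqrt (D : ℝ) : ℝ) : ℂ), x₁, y₁} =
      IntermediateField.adjoin ℚ (g.rootSet ℂ) ∧
    Module.finrank ℚ
      (IntermediateField.adjoin ℚ {((Real.sqrt (D : ℝ) : ℝ) : ℂ), x₁, y₁}) = 2 * n ^ 2 := by
  obtain ⟨hKf, hK⟩ := aux_K D hD2
  obtain ⟨hE1, hE2⟩ := aux_bound (ratSqrtField D) f₁ hmonic x₁ hx₁
  have hadj : ∀ (w : ℂ) (M : IntermediateField ℚ ℂ), ((Real.sqrt (D : ℝ) : ℝ) : ℂ) ∈ M → w ∈ M →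
      (IntermediateField.adjoin (ratSqrtField D) {w}).restrictScalars ℚ ≤ M := by
    intro w M hs hw
    have hKM : ratSqrtField D ≤ M := by
      unfold ratSqrtField
      rwa [IntermediateField.adjoin_simple_le_iff]
    have : IntermediateField.adjoin (ratSqrtField D) {w} ≤ IntermediateField.extendScalars hKM := by
      rw [IntermediateField.adjoin_simple_le_iff]
      exact hw
    exact this
  set E := (IntermediateField.adjoin (ratSqrtField D) {x₁}).restrictScalars ℚ with hE
  have hKE : ratSqrtField D ≤ E := fun a ha =>
    (IntermediateField.adjoin (ratSqrtField D) {x₁}).algebraMap_mem ⟨a, ha⟩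
  have hxE : x₁ ∈ E := IntermediateField.mem_adjoin_simple_self (ratSqrtField D) x₁
  have hm' : (f₁.map (σ : ratSqrtField D →+* ratSqrtField D)).Monic := hmonic.map _
  set q : Polynomial E := (f₁.map (σ : ratSqrtField D →+* ratSqrtField D)).map
    (IntermediateField.inclusion hKE : ratSqrtField D →+* E) with hq
  have hqm : q.Monic := hm'.map _
  have hqd : q.natDegree = n := by rw [hq, hm'.natDegree_map, hmonic.natDegree_map, hdeg]
  have hqy : Polynomial.aeval y₁ q = 0 := by
    rw [hq, Polynomial.aeval_def, Polynomial.eval₂_map]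
    exact hy₁
  obtain ⟨hL1, hL2⟩ := aux_bound E q hqm y₁ hqy
  set L' := (IntermediateField.adjoin E {y₁}).restrictScalars ℚ with hL'
  have hEL : E ≤ L' := fun a ha =>
    (IntermediateField.adjoin E {y₁}).algebraMap_mem ⟨a, ha⟩
  have hsK : ((Real.sqrt (D : ℝ) : ℝ) : ℂ) ∈ ratSqrtField D := (ratSqrt D).2
  have hLL : IntermediateField.adjoin ℚ {((Real.sqrt (D : ℝ) : ℝ) : ℂ), x₁, y₁} ≤ L' := by
    rw [IntermediateField.adjoin_le_iff]
    rintro a (rfl | rfl | rfl)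
    · exact hEL (hKE hsK)
    · exact hEL hxE
    · exact IntermediateField.mem_adjoin_simple_self E _
  set L := IntermediateField.adjoin ℚ {((Real.sqrt (D : ℝ) : ℝ) : ℂ), x₁, y₁} with hL
  have hsub : {((Real.sqrt (D : ℝ) : ℝ) : ℂ), x₁, y₁} ⊆ (L : Set ℂ) :=
    IntermediateField.subset_adjoin ℚ _
  have hFL : IntermediateField.adjoin ℚ (g.rootSet ℂ) ≤ L := by
    rw [IntermediateField.adjoin_le_iff]
    intro w hw
    have hw0 : Polynomial.aeval w g = 0 := (Polynomial.mem_rootSet.1 hw).2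
    rw [← Polynomial.aeval_map_algebraMap (ratSqrtField D), hg, map_mul, mul_eq_zero] at hw0
    rcases hw0 with h | h
    · exact hadj x₁ L (hsub (by simp)) (hsub (by simp)) (hxall w h)
    · exact hadj y₁ L (hsub (by simp)) (hsub (by simp)) (hyall w h)
  have hLfin : FiniteDimensional ℚ L :=
    Submodule.finiteDimensional_of_le (S₁ := L.toSubalgebra.toSubmodule) (S₂ := L'.toSubalgebra.toSubmodule) hLL
  have hLle : Module.finrank ℚ L ≤ Module.finrank ℚ L' :=
    Submodule.finrank_mono (s := L.toSubalgebra.toSubmodule) (t := L'.toSubalgebra.toSubmodule) hLL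
  have hFfin : FiniteDimensional ℚ (IntermediateField.adjoin ℚ (g.rootSet ℂ)) :=
    Submodule.finiteDimensional_of_le (S₁ := (IntermediateField.adjoin ℚ (g.rootSet ℂ)).toSubalgebra.toSubmodule) (S₂ := L.toSubalgebra.toSubmodule) hFL
  have hFle : Module.finrank ℚ (IntermediateField.adjoin ℚ (g.rootSet ℂ)) ≤ Module.finrank ℚ L :=
    Submodule.finrank_mono (s := (IntermediateField.adjoin ℚ (g.rootSet ℂ)).toSubalgebra.toSubmodule) (t := L.toSubalgebra.toSubmodule) hFL
  have hlow := aux_lower _ τ z hτz g hirr hzroot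
  have hgd : g.natDegree = 2 * n := by
    have := congrArg Polynomial.natDegree hg
    rw [Polynomial.natDegree_map, hmonic.natDegree_mul hm', hmonic.natDegree_map, hdeg] at this
    omega
  rw [hτord, hgd] at hlow
  rw [hqd] at hL2
  rw [hdeg] at hE2
  have hup : Module.finrank ℚ L' ≤ 2 * n * n :=
    hL2.trans (Nat.mul_le_mul_right _ (hE2.trans (Nat.mul_le_mul_right _ hK)))
  have heq : IntermediateField.adjoin ℚ (g.rootSet ℂ) = L :=
    IntermediateField.eq_of_le_of_finrank_le hFL (by omega)
  refine ⟨heq.symm, ?_⟩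
  rw [pow_two, ← mul_assoc]
  omega
end

section
/- Let n ≥ 3 and let G be a group generated by three elements σ, τ, ρ satisfying: σ and τ commute, σ and τ each have order n, the cyclic subgroups ⟨σ⟩ and ⟨τ⟩ intersect trivially, ρ has order 2, and ρσρ⁻¹ = τ. Let H' = ⟨στ, ρ⟩ be the subgroup generated by στ and ρ. Then H' is abelian of order 2n, but H' is not a normal subgroup of G; specifically, σρσ⁻¹ does not lie in H'. -/
/-- Let `n ≥ 3` and `G` be generated by `σ, τ, ρ` as before, and let
`H' = ⟨στ, ρ⟩`.  Then `H'` is abelian of order `2n`, but is not normal in `G`; specifically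
`σρσ⁻¹ ∉ H'`. -/
theorem stmt16 {G : Type*} [Group G] (n : ℕ) (hn : 3 ≤ n) (σ τ ρ : G)
    (hgen : Subgroup.closure {σ, τ, ρ} = ⊤)
    (hcomm : σ * τ = τ * σ)
    (hσ : orderOf σ = n) (hτ : orderOf τ = n)
    (hint : Subgroup.zpowers σ ⊓ Subgroup.zpowers τ = ⊥)
    (hρ : orderOf ρ = 2) (hconj : ρ * σ * ρ⁻¹ = τ) :
    (∀ x ∈ Subgroup.closure {σ * τ, ρ}, ∀ y ∈ Subgroup.closure {σ * τ, ρ}, x * y = y * x) ∧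
    Nat.card (Subgroup.closure {σ * τ, ρ}) = 2 * n ∧
    ¬ (Subgroup.closure {σ * τ, ρ}).Normal ∧
    σ * ρ * σ⁻¹ ∉ Subgroup.closure {σ * τ, ρ} := by
  have hρ2 : ρ * ρ = 1 := by
    have := pow_orderOf_eq_one ρ
    rwa [hρ, pow_two] at this
  have hρi : ρ⁻¹ = ρ := inv_eq_of_mul_eq_one_left hρ2
  have h1 : ρ * σ = τ * ρ := by rw [← hconj]; group
  have h2 : ρ * τ = σ * ρ := by
    rw [← hconj, hρi]
    calc ρ * (ρ * σ * ρ) = (ρ * ρ) * σ * ρ := by group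
      _ = σ * ρ := by rw [hρ2, one_mul]
  have hst : Commute σ τ := hcomm
  have hcρ : Commute (σ * τ) ρ := by
    show σ * τ * ρ = ρ * (σ * τ)
    rw [← mul_assoc, h1, mul_assoc τ, h2, ← mul_assoc, hcomm]
  have htriv : ∀ k : ℤ, ∀ x, x = σ ^ k → x ∈ Subgroup.zpowers τ → x = 1 := by
    intro k x hx hxτ
    have : x ∈ Subgroup.zpowers σ ⊓ Subgroup.zpowers τ :=
      ⟨hx ▸ Subgroup.zpow_mem_zpowers σ k, hxτ⟩
    rwa [hint, Subgroup.mem_bot] at this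
  have hσ1 : σ ≠ 1 := by
    rintro rfl
    simp at hσ
    omega
  have hne : σ ≠ τ := by
    intro h
    exact hσ1 (htriv 1 σ (by simp) (h ▸ Subgroup.mem_zpowers σ))
  have hord : orderOf (σ * τ) = n := by
    apply Nat.dvd_antisymm
    · apply orderOf_dvd_of_pow_eq_one
      have e1 := pow_orderOf_eq_one σ
      have e2 := pow_orderOf_eq_one τ
      rw [hσ] at e1
      rw [hτ] at e2
      rw [hst.mul_pow, e1, e2, one_mul]
    · have e := pow_orderOf_eq_one (σ * τ)
      rw [hst.mul_pow] at e
      rw [← hσ]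
      apply orderOf_dvd_of_pow_eq_one
      refine htriv (orderOf (σ * τ)) _ (by simp) ?_
      rw [eq_inv_of_mul_eq_one_left e]
      exact inv_mem (Subgroup.npow_mem_zpowers τ _)
  have hρc : ρ ∉ Subgroup.zpowers (σ * τ) := by
    rintro ⟨k, hk⟩
    have hc : Commute (σ * τ) σ := (Commute.refl σ).mul_left hst.symm
    have hc2 : Commute ρ σ := by
      rw [← hk]
      exact hc.zpow_left k
    apply hne
    rw [← hconj, hc2.eq]
    group
  have hab : ∀ x ∈ Subgroup.closure {σ * τ, ρ}, ∀ y ∈ Subgroup.closure {σ * τ, ρ},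
      x * y = y * x := by
    have hle : Subgroup.closure {σ * τ, ρ} ≤ Subgroup.centralizer {σ * τ, ρ} := by
      rw [Subgroup.closure_le]
      rintro x (rfl | rfl) y (rfl | rfl)
      · rfl
      · exact hcρ.symm.eq
      · exact hcρ.eq
      · rfl
    intro x hx y hy
    have hle2 : Subgroup.closure {σ * τ, ρ} ≤ Subgroup.centralizer {x} := by
      rw [Subgroup.closure_le]
      rintro z hz w rfl
      exact (hle hx z hz).symm
    exact hle2 hy x rfl
  have hnot : σ * ρ * σ⁻¹ ∉ Subgroup.closure {σ * τ, ρ} := by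
    intro hmem
    have h := hab _ hmem ρ (Subgroup.subset_closure (by simp))
    have h3 : ρ * σ⁻¹ = τ⁻¹ * ρ := by
      rw [eq_inv_mul_iff_mul_eq, ← mul_assoc, ← h1]; group
    have h4 : σ * τ⁻¹ = τ * σ⁻¹ := by
      calc σ * τ⁻¹ = σ * τ⁻¹ * (ρ * ρ) := by rw [hρ2, mul_one]
        _ = σ * (τ⁻¹ * ρ) * ρ := by group
        _ = σ * ρ * σ⁻¹ * ρ := by rw [← h3]; group
        _ = ρ * (σ * ρ * σ⁻¹) := h
        _ = (ρ * σ) * ρ * σ⁻¹ := by group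
        _ = τ * (ρ * ρ) * σ⁻¹ := by rw [h1]; group
        _ = τ * σ⁻¹ := by rw [hρ2, mul_one]
    have h5 : σ ^ 2 = τ ^ 2 := by
      calc σ ^ 2 = σ * τ⁻¹ * (τ * σ) := by rw [pow_two]; group
        _ = τ * σ⁻¹ * (σ * τ) := by rw [h4, hcomm]
        _ = τ ^ 2 := by rw [pow_two]; group
    have h6 : σ ^ 2 = 1 := by
      refine htriv 2 _ (by norm_cast) ?_
      rw [h5]
      exact Subgroup.npow_mem_zpowers τ 2
    have := Nat.le_of_dvd (by norm_num) (orderOf_dvd_of_pow_eq_one h6)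
    omega
  refine ⟨hab, ?_, ?_, hnot⟩
  · have hdis : Disjoint (Subgroup.zpowers (σ * τ)) (Subgroup.zpowers ρ) := by
      rw [Subgroup.disjoint_def]
      rintro x hx ⟨j, rfl⟩
      rcases Int.even_or_odd' j with ⟨m, rfl | rfl⟩
      · simp [zpow_mul, pow_two, hρ2]
      · exact absurd (by simpa [zpow_add, zpow_mul, pow_two, hρ2] using hx) hρc
    have hcm : ∀ (x : Subgroup.zpowers (σ * τ)) (y : Subgroup.zpowers ρ),
        Commute ((Subgroup.zpowers (σ * τ)).subtype x) ((Subgroup.zpowers ρ).subtype y) := by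
      rintro ⟨_, k, rfl⟩ ⟨_, j, rfl⟩
      exact hcρ.zpow_zpow k j
    let f := MonoidHom.noncommCoprod _ _ hcm
    have hinj : Function.Injective f := by
      rw [MonoidHom.noncommCoprod_injective]
      simpa using hdis
    have hrange : f.range = Subgroup.closure {σ * τ, ρ} := by
      rw [MonoidHom.noncommCoprod_range]
      simp only [Subgroup.range_subtype]
      rw [Set.insert_eq, Subgroup.closure_union, Subgroup.zpowers_eq_closure,
        Subgroup.zpowers_eq_closure]
    rw [← hrange, ← Nat.card_congr (MonoidHom.ofInjective hinj).toEquiv, Nat.card_prod,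
      Nat.card_zpowers, Nat.card_zpowers, hord, hρ, mul_comm]
  · intro hN
    exact hnot (hN.conj_mem ρ (Subgroup.subset_closure (by simp)) σ)
end

section
/- Let n ≥ 3, let L ⊆ ℂ be a finite Galois extension of ℚ with Galois group G = Gal(L/ℚ) of order 2n², and suppose G is generated by elements σ, τ, ρ satisfying: σ and τ commute, σ and τ each have order n, ⟨σ⟩ ∩ ⟨τ⟩ is trivial, ρ has order 2, and ρσρ⁻¹ = τ. Let H' = ⟨στ, ρ⟩ and let z ∈ L be an element whose stabilizer {μ ∈ G : μ(z) = z} is exactly H'. Then the minimal polynomial g of z over ℚ has degree n, the extension ℚ(z)/ℚ is not Galois, and the Galois group of the splitting field of g over ℚ is isomorphic to the dihedral group D_n of order 2n. -/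
set_option synthInstance.maxHeartbeats 1000000
set_option maxHeartbeats 1000000

theorem aux_dihedral {Q : Type*} [Group Q] (n : ℕ) (s r : Q) (hs : orderOf s = n)
    (hr : r * r = 1) (hsr : ∀ k : ℤ, s ^ k * r = r * s ^ (-k))
    (hne : ∀ k : ℤ, r ≠ s ^ k)
    (hsurj : ∀ q : Q, ∃ k : ℤ, q = s ^ k ∨ q = r * s ^ k) :
    Nonempty (Q ≃* DihedralGroup n) := by
  have key : ∀ a b : ℤ, s ^ a = s ^ b ↔ (a : ZMod n) = (b : ZMod n) := by
    intro a b
    rw [zpow_eq_zpow_iff_modEq, hs, ZMod.intCast_eq_intCast_iff]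
  have kc : ∀ i : ZMod n, (((i.cast : ℤ)) : ZMod n) = i := fun i => ZMod.intCast_zmod_cast i
  let F : DihedralGroup n → Q := fun x => match x with
    | .r i => s ^ (i.cast : ℤ)
    | .sr i => r * s ^ (i.cast : ℤ)
  have hF : ∀ x y, F (x * y) = F x * F y := by
    rintro (i | i) (j | j)
    · simp only [DihedralGroup.r_mul_r, F]
      rw [← zpow_add, key]; simp only [Int.cast_add, Int.cast_neg, kc]
    · simp only [DihedralGroup.r_mul_sr, F]
      rw [← mul_assoc, hsr, mul_assoc, ← zpow_add, mul_right_inj, key]; simp only [Int.cast_add, Int.cast_neg, kc]; ring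
    · simp only [DihedralGroup.sr_mul_r, F]
      rw [mul_assoc, ← zpow_add, mul_right_inj, key]; simp only [Int.cast_add, Int.cast_neg, kc]
    · simp only [DihedralGroup.sr_mul_sr, F]
      rw [mul_assoc, ← mul_assoc (s ^ _) r, hsr, mul_assoc, ← mul_assoc r r, hr, one_mul,
        ← zpow_add, key]; simp only [Int.cast_add, Int.cast_neg, kc]; ring
  let f : DihedralGroup n →* Q := MonoidHom.mk' F hF
  refine ⟨(MulEquiv.ofBijective f ⟨?_, ?_⟩).symm⟩
  · rw [injective_iff_map_eq_one]
    rintro (i | i) h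
    · change s ^ (i.cast : ℤ) = 1 at h
      rw [← zpow_zero s, key, kc] at h
      rw [h]; simp
    · change r * s ^ (i.cast : ℤ) = 1 at h
      exact absurd (by rw [zpow_neg]; exact eq_inv_of_mul_eq_one_left h) (hne (-(i.cast : ℤ)))
  · intro q
    obtain ⟨k, h | h⟩ := hsurj q
    · exact ⟨.r (k : ZMod n), by rw [h]; change s ^ (((k : ZMod n).cast : ℤ)) = _; rw [key, kc]⟩
    · exact ⟨.sr (k : ZMod n), by rw [h]; change r * s ^ (((k : ZMod n).cast : ℤ)) = _; rw [mul_right_inj, key, kc]⟩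

theorem aux_group {G : Type*} [Group G] (n : ℕ) (hn : 3 ≤ n) (σ τ ρ : G)
    (hgen : Subgroup.closure {σ, τ, ρ} = ⊤)
    (hcomm : σ * τ = τ * σ)
    (hσ : orderOf σ = n)
    (hint : Subgroup.zpowers σ ⊓ Subgroup.zpowers τ = ⊥)
    (hρ : orderOf ρ = 2) (hconj : ρ * σ * ρ⁻¹ = τ) :
    (ρ * ρ = 1) ∧ (∀ k : ℤ, ρ * σ ^ k = τ ^ k * ρ) ∧ (∀ k : ℤ, ρ * τ ^ k = σ ^ k * ρ) ∧
    (∀ k : ℤ, σ ^ k ∈ Subgroup.closure {σ * τ, ρ} → (n : ℤ) ∣ k) ∧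
    (∀ g : G, ∃ k : ℤ, ∃ h ∈ Subgroup.closure {σ * τ, ρ}, g = σ ^ k * h) ∧
    (∀ h ∈ Subgroup.closure {σ * τ, ρ}, ∃ a : ℤ, h = (σ * τ) ^ a ∨ h = (σ * τ) ^ a * ρ) := by
  have hρρ : ρ * ρ = 1 := by rw [← sq, ← hρ, pow_orderOf_eq_one]
  have hinv : ρ⁻¹ = ρ := inv_eq_of_mul_eq_one_left hρρ
  have hc1 : ∀ k : ℤ, ρ * σ ^ k = τ ^ k * ρ := by
    intro k
    rw [← hconj, conj_zpow]; group
  have hc2 : ∀ k : ℤ, ρ * τ ^ k = σ ^ k * ρ := by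
    intro k
    have := hc1 k
    calc ρ * τ ^ k = ρ * (τ ^ k * ρ) * ρ := by simp [mul_assoc, hρρ]
      _ = ρ * (ρ * σ ^ k) * ρ := by rw [hc1]
      _ = _ := by rw [← mul_assoc ρ ρ, hρρ, one_mul]
  have C : Commute σ τ := hcomm
  have hcz : ∀ a : ℤ, ρ * (σ * τ) ^ a = (σ * τ) ^ a * ρ := by
    intro a
    rw [C.mul_zpow, ← mul_assoc, hc1, mul_assoc, hc2, ← mul_assoc, (C.zpow_zpow a a).eq]
  have hform : ∀ h ∈ Subgroup.closure {σ * τ, ρ}, ∃ a : ℤ, h = (σ * τ) ^ a ∨ h = (σ * τ) ^ a * ρ := by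
    intro h hh
    induction hh using Subgroup.closure_induction with
    | mem x hx =>
      rcases hx with rfl | rfl
      · exact ⟨1, Or.inl (by simp)⟩
      · exact ⟨0, Or.inr (by simp)⟩
    | one => exact ⟨0, Or.inl (by simp)⟩
    | mul x y _ _ hx hy =>
      obtain ⟨a, rfl | rfl⟩ := hx <;> obtain ⟨b, rfl | rfl⟩ := hy
      · exact ⟨a + b, Or.inl (by rw [zpow_add])⟩
      · exact ⟨a + b, Or.inr (by rw [zpow_add, mul_assoc])⟩
      · exact ⟨a + b, Or.inr (by rw [zpow_add, mul_assoc, hcz, mul_assoc])⟩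
      · exact ⟨a + b, Or.inl (by
          rw [zpow_add, mul_assoc, ← mul_assoc ρ, hcz, mul_assoc, hρρ, mul_one])⟩
    | inv x _ hx =>
      obtain ⟨a, rfl | rfl⟩ := hx
      · exact ⟨-a, Or.inl (by rw [zpow_neg])⟩
      · exact ⟨-a, Or.inr (by rw [mul_inv_rev, hinv, ← zpow_neg, hcz])⟩
  have hst : ∀ a b : ℤ, σ ^ a = τ ^ b → σ ^ a = 1 := by
    intro a b h
    have : σ ^ a ∈ Subgroup.zpowers σ ⊓ Subgroup.zpowers τ :=
      ⟨⟨a, rfl⟩, ⟨b, h.symm⟩⟩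
    rw [hint] at this
    exact Subgroup.mem_bot.1 this
  have hσ1 : ∀ a : ℤ, σ ^ a = 1 ↔ (n : ℤ) ∣ a := by
    intro a
    rw [← orderOf_dvd_iff_zpow_eq_one, hσ]
  have hnot : ∀ a b : ℤ, ρ ≠ σ ^ a * τ ^ b := by
    intro a b h
    have h1 : Commute ρ σ := by
      rw [h]
      exact ((Commute.refl σ).zpow_left a).mul_left (C.symm.zpow_left b)
    have h2 : σ = τ := by rw [← hconj, h1.eq]; group
    have := (hσ1 1).1 (hst 1 1 (by rw [h2]))
    have := Int.le_of_dvd one_pos this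
    omega
  have hdvd : ∀ k : ℤ, σ ^ k ∈ Subgroup.closure {σ * τ, ρ} → (n : ℤ) ∣ k := by
    intro k hk
    obtain ⟨a, h | h⟩ := hform _ hk
    · rw [C.mul_zpow] at h
      have h1 : σ ^ (k - a) = τ ^ a := by
        rw [sub_eq_neg_add, zpow_add, h, zpow_neg]; group
      have h2 := hst _ _ h1
      have h3 : σ ^ a = 1 := by
        have h4 : τ ^ a = 1 := by rw [← h1, h2]
        have := hc1 a
        rw [h4, one_mul] at this
        exact mul_eq_left.1 this
      have e := dvd_add ((hσ1 _).1 h2) ((hσ1 _).1 h3)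
      simpa using e
    · exfalso
      rw [C.mul_zpow] at h
      apply hnot (k - a) (-a)
      have : ρ = (σ ^ a * τ ^ a)⁻¹ * σ ^ k := by rw [h]; group
      rw [this, (C.zpow_zpow a a).eq, mul_inv_rev, ← zpow_neg, ← zpow_neg, mul_assoc,
        ← (C.zpow_zpow k (-a)).eq, ← mul_assoc, ← zpow_add, neg_add_eq_sub]
  have hmem1 : σ * τ ∈ Subgroup.closure {σ * τ, ρ} := Subgroup.subset_closure (by simp)
  have hmem2 : ρ ∈ Subgroup.closure {σ * τ, ρ} := Subgroup.subset_closure (by simp)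
  refine ⟨hρρ, hc1, hc2, hdvd, ?_, hform⟩
  intro g
  have hτk : ∀ k : ℤ, τ ^ k = σ ^ (-k) * (σ * τ) ^ k := by
    intro k
    rw [C.mul_zpow]; group
  have P1 : ∀ (j : ℤ) (x : G), (∃ k : ℤ, ∃ h ∈ Subgroup.closure {σ * τ, ρ}, x = σ ^ k * h) →
      (∃ k : ℤ, ∃ h ∈ Subgroup.closure {σ * τ, ρ}, σ ^ j * x = σ ^ k * h) := by
    rintro j x ⟨k, h, hh, rfl⟩
    exact ⟨j + k, h, hh, by rw [zpow_add, mul_assoc]⟩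
  have P2 : ∀ (j : ℤ) (x : G), (∃ k : ℤ, ∃ h ∈ Subgroup.closure {σ * τ, ρ}, x = σ ^ k * h) →
      (∃ k : ℤ, ∃ h ∈ Subgroup.closure {σ * τ, ρ}, τ ^ j * x = σ ^ k * h) := by
    rintro j x ⟨k, h, hh, rfl⟩
    refine ⟨k - j, (σ * τ) ^ j * h, mul_mem (zpow_mem hmem1 j) hh, ?_⟩
    rw [← mul_assoc, ← (C.zpow_zpow k j).eq, hτk, ← mul_assoc, ← zpow_add, mul_assoc, sub_eq_add_neg]
  have P3 : ∀ (x : G), (∃ k : ℤ, ∃ h ∈ Subgroup.closure {σ * τ, ρ}, x = σ ^ k * h) →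
      (∃ k : ℤ, ∃ h ∈ Subgroup.closure {σ * τ, ρ}, ρ * x = σ ^ k * h) := by
    rintro x ⟨k, h, hh, rfl⟩
    refine ⟨-k, (σ * τ) ^ k * (ρ * h), mul_mem (zpow_mem hmem1 k) (mul_mem hmem2 hh), ?_⟩
    rw [← mul_assoc, hc1, hτk, mul_assoc, mul_assoc]
  have hg : g ∈ Subgroup.closure {σ, τ, ρ} := hgen ▸ Subgroup.mem_top g
  induction hg using Subgroup.closure_induction_left with
  | one => exact ⟨0, 1, one_mem _, by simp⟩
  | mul_left x hx y _ ih =>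
    rcases hx with rfl | rfl | rfl
    · simpa using P1 1 y ih
    · simpa using P2 1 y ih
    · exact P3 y ih
  | inv_mul_cancel x hx y _ ih =>
    rcases hx with rfl | rfl | rfl
    · simpa using P1 (-1) y ih
    · simpa using P2 (-1) y ih
    · rw [hinv]; exact P3 y ih

theorem aux_main {F L E : Type*} [Field F] [Field L] [Field E] [Algebra F L] [Algebra F E]
    (φ : L →ₐ[F] E) (n : ℕ) (hn : 3 ≤ n)
    [FiniteDimensional F L] [IsGalois F L]
    (σ τ ρ : L ≃ₐ[F] L)
    (hgen : Subgroup.closure {σ, τ, ρ} = ⊤)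
    (hcomm : σ * τ = τ * σ)
    (hσ : orderOf σ = n)
    (hint : Subgroup.zpowers σ ⊓ Subgroup.zpowers τ = ⊥)
    (hρ : orderOf ρ = 2) (hconj : ρ * σ * ρ⁻¹ = τ)
    (z : L)
    (hstab : ∀ μ : L ≃ₐ[F] L, μ z = z ↔ μ ∈ Subgroup.closure {σ * τ, ρ}) :
    (minpoly F z).natDegree = n ∧
    ¬ IsGalois F (IntermediateField.adjoin F {z} : IntermediateField F L) ∧
    Nonempty
      (((IntermediateField.adjoin F ((minpoly F z).rootSet E) : IntermediateField F E) ≃ₐ[F]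
        (IntermediateField.adjoin F ((minpoly F z).rootSet E) : IntermediateField F E)) ≃*
        DihedralGroup n) := by
  obtain ⟨hρρ, hc1, hc2, hdvd, hdec, hform⟩ := aux_group n hn σ τ ρ hgen hcomm hσ hint hρ hconj
  have C : Commute σ τ := hcomm
  have hmem1 : σ * τ ∈ Subgroup.closure {σ * τ, ρ} := Subgroup.subset_closure (by simp)
  have hmem2 : ρ ∈ Subgroup.closure {σ * τ, ρ} := Subgroup.subset_closure (by simp)
  have hfix : (IntermediateField.adjoin F {z} : IntermediateField F L).fixingSubgroup =
      Subgroup.closure {σ * τ, ρ} := by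
    ext μ
    rw [← hstab]
    constructor
    · intro h
      exact (IntermediateField.mem_fixingSubgroup_iff _ _).1 h z
        (IntermediateField.mem_adjoin_simple_self F z)
    · intro h
      have h1 : (IntermediateField.adjoin F {z} : IntermediateField F L) ≤
          IntermediateField.fixedField (Subgroup.zpowers μ) := by
        rw [IntermediateField.adjoin_simple_le_iff, IntermediateField.mem_fixedField_iff]
        intro f hf
        have : Subgroup.zpowers μ ≤ MulAction.stabilizer (L ≃ₐ[F] L) z := by
          rw [Subgroup.zpowers_le]; exact h
        exact this hf
      exact (IntermediateField.le_iff_le _ _).1 h1 (Subgroup.mem_zpowers μ)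
  have hσ2 : σ ^ (2 : ℤ) ∉ Subgroup.closure {σ * τ, ρ} := by
    intro h
    have := Int.le_of_dvd two_pos (hdvd 2 h)
    omega
  refine ⟨?_, ?_, ?_⟩
  · rw [← IntermediateField.adjoin.finrank (Algebra.IsIntegral.isIntegral z),
      IntermediateField.finrank_eq_fixingSubgroup_index, hfix, Subgroup.index, ← hσ,
      ← Nat.card_zpowers]
    symm
    refine Nat.card_eq_of_bijective
      (fun x : Subgroup.zpowers σ => (QuotientGroup.mk x.1 : _ ⧸ Subgroup.closure {σ * τ, ρ}))
      ⟨?_, ?_⟩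
    · rintro ⟨_, a, rfl⟩ ⟨_, b, rfl⟩ h
      rw [QuotientGroup.eq] at h
      have h' : σ ^ (-a + b) ∈ Subgroup.closure {σ * τ, ρ} := by
        rw [zpow_add, zpow_neg]; exact h
      have h2 := hdvd _ h'
      rw [← hσ, orderOf_dvd_iff_zpow_eq_one, zpow_add, zpow_neg] at h2
      exact Subtype.ext (inv_mul_eq_one.1 h2)
    · intro q
      obtain ⟨g, rfl⟩ := QuotientGroup.mk_surjective q
      obtain ⟨k, h, hh, rfl⟩ := hdec g
      refine ⟨⟨σ ^ k, k, rfl⟩, ?_⟩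
      rw [QuotientGroup.eq]
      simpa using hh
  · intro hG
    have hN : (Subgroup.closure {σ * τ, ρ}).Normal := by
      rw [← hfix]; infer_instance
    have h1 := hN.conj_mem ρ hmem2 σ
    apply hσ2
    have h2 : σ ^ (2 : ℤ) = (σ * ρ * σ⁻¹) * ρ * (σ * τ) := by
      have h3 := hc1 (-1)
      rw [zpow_neg_one, zpow_neg_one] at h3
      rw [mul_assoc σ, h3, mul_assoc, mul_assoc, mul_assoc, ← mul_assoc ρ ρ, hρρ, one_mul, hcomm,
        inv_mul_cancel_left, zpow_two]
    rw [h2]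
    exact mul_mem (mul_mem h1 hmem2) hmem1
  · have hspl : ((minpoly F z).map (algebraMap F L)).Splits := IsGalois.splits F z
    let M : IntermediateField F L := IntermediateField.adjoin F ((minpoly F z).rootSet L)
    have hM : IntermediateField.adjoin F ((minpoly F z).rootSet E) = M.map φ := by
      simp only [M]; rw [IntermediateField.adjoin_map, hspl.image_rootSet φ]
    have : (minpoly F z).IsSplittingField F M :=
      IntermediateField.adjoin_rootSet_isSplittingField hspl
    have : Normal F M := Normal.of_isSplittingField (minpoly F z)
    let e : M ≃ₐ[F] (IntermediateField.adjoin F ((minpoly F z).rootSet E) :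
      IntermediateField F E) :=
      (IntermediateField.equivMap M φ).trans (IntermediateField.equivOfEq hM.symm)
    let res : (L ≃ₐ[F] L) →* (M ≃ₐ[F] M) := AlgEquiv.restrictNormalHom M
    have hsur : Function.Surjective res := AlgEquiv.restrictNormalHom_surjective L
    have hker : ∀ g, res g = 1 ↔ g ∈ M.fixingSubgroup := by
      intro g
      rw [← IntermediateField.restrictNormalHom_ker]; rfl
    have hz : z ∈ M := IntermediateField.subset_adjoin _ _ (by
      rw [Polynomial.mem_rootSet]
      exact ⟨minpoly.ne_zero (Algebra.IsIntegral.isIntegral z), minpoly.aeval F z⟩)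
    have hk1 : ∀ g, res g = 1 → g ∈ Subgroup.closure {σ * τ, ρ} := by
      intro g hg
      rw [← hstab]
      exact (IntermediateField.mem_fixingSubgroup_iff _ _).1 ((hker g).1 hg) z hz
    have hk2 : res (σ * τ) = 1 := by
      rw [hker]
      have h1 : M ≤ IntermediateField.fixedField (Subgroup.zpowers (σ * τ)) := by
        apply IntermediateField.adjoin_le_iff.2
        intro y hy
        have hy' := hy
        rw [Polynomial.mem_rootSet] at hy
        have hmin : minpoly F z = minpoly F y :=
          minpoly.eq_of_irreducible_of_monic
            (minpoly.irreducible (Algebra.IsIntegral.isIntegral z)) hy.2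
            (minpoly.monic (Algebra.IsIntegral.isIntegral z))
        obtain ⟨g, hg⟩ := (isConjRoot_iff_exists_algEquiv (K := F) (x := y) (y := z)).1 hmin.symm
        rw [SetLike.mem_coe, IntermediateField.mem_fixedField_iff]
        have : Subgroup.zpowers (σ * τ) ≤ MulAction.stabilizer (L ≃ₐ[F] L) y := by
          rw [Subgroup.zpowers_le]
          change (σ * τ) y = y
          obtain ⟨k, h, hh, rfl⟩ := hdec g
          have hh' := (hstab h).2 hh
          have hy2 : y = (σ ^ k) z := by
            rw [← hg, AlgEquiv.mul_apply, hh']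
          rw [hy2, ← AlgEquiv.mul_apply]
          have hcc : Commute (σ * τ) (σ ^ k) :=
            ((Commute.refl σ).zpow_right k).mul_left (C.symm.zpow_right k)
          rw [hcc.eq, AlgEquiv.mul_apply, (hstab _).2 hmem1]
        intro f hf
        exact this hf
      exact (IntermediateField.le_iff_le _ _).1 h1 (Subgroup.mem_zpowers _)
    have hτi : ∀ k : ℤ, res τ ^ k = res σ ^ (-k) := by
      intro k
      rw [map_mul] at hk2
      rw [zpow_neg, ← inv_zpow, eq_inv_of_mul_eq_one_right hk2]
    have hsr : ∀ k : ℤ, res σ ^ k * res ρ = res ρ * res σ ^ (-k) := by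
      intro k
      rw [← hτi, ← map_zpow, ← map_zpow, ← map_mul, ← map_mul, hc2]
    have hs : orderOf (res σ) = n := by
      apply Nat.dvd_antisymm
      · rw [orderOf_dvd_iff_pow_eq_one, ← map_pow, ← hσ, pow_orderOf_eq_one, map_one]
      · rw [← Int.natCast_dvd_natCast]
        apply hdvd
        apply hk1
        rw [zpow_natCast, map_pow, pow_orderOf_eq_one]
    obtain ⟨Eq⟩ := aux_dihedral n (res σ) (res ρ) hs (by rw [← map_mul, hρρ, map_one]) hsr
      (by
        intro k hk
        have h1 := hsr 1
        rw [hk, ← zpow_add, ← zpow_add] at h1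
        apply hσ2
        apply hk1
        rw [map_zpow]
        have h2 : res σ ^ (2 : ℤ) = res σ ^ (1 + k) * (res σ ^ (k + -1))⁻¹ := by
          rw [← zpow_neg, ← zpow_add]; congr 1; ring
        rw [h2, h1, mul_inv_cancel])
      (by
        intro q
        obtain ⟨g, rfl⟩ := hsur q
        obtain ⟨k, h, hh, rfl⟩ := hdec g
        obtain ⟨a, rfl | rfl⟩ := hform h hh
        · exact ⟨k, Or.inl (by rw [map_mul, map_zpow, map_zpow, hk2, one_zpow, mul_one])⟩
        · exact ⟨-k, Or.inr (by
            rw [map_mul, map_mul, map_zpow, map_zpow, hk2, one_zpow, one_mul, hsr])⟩)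
    exact ⟨(AlgEquiv.autCongr e.symm).trans Eq⟩

theorem aux_cast {K D : Type*} [Field K] [Group D] (a b : Algebra ℚ K)
    (h : Nonempty ((letI := a; K ≃ₐ[ℚ] K) ≃* D)) :
    Nonempty ((letI := b; K ≃ₐ[ℚ] K) ≃* D) := by
  have e : a = b := Subsingleton.elim _ _
  subst e
  exact h

/-- Let `n ≥ 3`, let `L ⊆ ℂ` be a finite Galois extension of `ℚ` with
Galois group `G` of order `2n²` generated by `σ, τ, ρ` as before (`σ, τ` commuting of order
`n`, `⟨σ⟩ ⊓ ⟨τ⟩` trivial, `ρ` of order `2`, `ρσρ⁻¹ = τ`).  Let `H' = ⟨στ, ρ⟩` and let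
`z ∈ L` have stabiliser exactly `H'`.  Then the minimal polynomial `g` of `z` over `ℚ` has
degree `n`, `ℚ(z)/ℚ` is not Galois, and the Galois group of the splitting field of `g`
over `ℚ` (inside `ℂ`) is isomorphic to the dihedral group `Dₙ` of order `2n`. -/
theorem stmt17 (n : ℕ) (hn : 3 ≤ n) (L : IntermediateField ℚ ℂ)
    [FiniteDimensional ℚ L] [IsGalois ℚ L]
    (hcard : Nat.card (L ≃ₐ[ℚ] L) = 2 * n ^ 2)
    (σ τ ρ : L ≃ₐ[ℚ] L)
    (hgen : Subgroup.closure {σ, τ, ρ} = ⊤)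
    (hcomm : σ * τ = τ * σ)
    (hσ : orderOf σ = n) (hτ : orderOf τ = n)
    (hint : Subgroup.zpowers σ ⊓ Subgroup.zpowers τ = ⊥)
    (hρ : orderOf ρ = 2) (hconj : ρ * σ * ρ⁻¹ = τ)
    (z : L)
    (hstab : ∀ μ : L ≃ₐ[ℚ] L, μ z = z ↔ μ ∈ Subgroup.closure {σ * τ, ρ}) :
    (minpoly ℚ z).natDegree = n ∧
    ¬ IsGalois ℚ (IntermediateField.adjoin ℚ {z} : IntermediateField ℚ L) ∧
    Nonempty
      (((IntermediateField.adjoin ℚ ((minpoly ℚ z).rootSet ℂ) : IntermediateField ℚ ℂ) ≃ₐ[ℚ]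
        (IntermediateField.adjoin ℚ ((minpoly ℚ z).rootSet ℂ) : IntermediateField ℚ ℂ)) ≃*
        DihedralGroup n) := by
  have h := aux_main (F := ℚ) (L := L) (E := ℂ) (L.subtype : L →+* ℂ).toRatAlgHom n hn σ τ ρ
    hgen hcomm hσ hint hρ hconj z hstab
  refine ⟨h.1, ?_, ?_⟩
  · convert h.2.1
    exact Subsingleton.elim _ _
  · exact aux_cast _ _ h.2.2
end
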